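/- arXiv:1912.05775 — 3 statements merged into one kernel-verified Lean document; each statement's English description precedes it below -/
import Mathlib

section
/- Let n ≥ 2 and let G = S_n(a_1, a_2, …, a_n) be a palm with 1 ≤ a_1 ≤ a_2 ≤ ⋯ ≤ a_n. If a_3 ≥ 2 and, for every nonnegative integer k ≤ log_3(n/4), a_{4·3^k + 1} ≥ 2k + 3 and a_{8·3^k + 1} ≥ 2k + 4, then χ_L(G) = ⌈log_3(n/4)⌉ + 3. -/
open SimpleGraph

/-- Distance from a vertex to a set of vertices, `d(u,S) = min {d(u,v) : v ∈ S}`. -/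
noncomputable def distToSet {V : Type*} (G : SimpleGraph V) (u : V) (S : Set V) : ℕ :=
  sInf (G.dist u '' S)

/-- `c` is a locating coloring of `G` with `k` colors: a proper coloring such that any two
distinct vertices are resolved by some color class. -/
def IsLocatingColoring {V : Type*} (G : SimpleGraph V) {k : ℕ} (c : V → Fin k) : Prop :=
  (∀ u v : V, G.Adj u v → c u ≠ c v) ∧
  ∀ u v : V, u ≠ v →
    ∃ i : Fin k, distToSet G u (c ⁻¹' {i}) ≠ distToSet G v (c ⁻¹' {i})

/-- The locating chromatic number `χ_L(G)`: the least `k` admitting a locating `k`-coloring. -/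
noncomputable def locatingChromaticNumber {V : Type*} (G : SimpleGraph V) : ℕ :=
  sInf {k : ℕ | ∃ c : V → Fin k, IsLocatingColoring G c}

/-- The vertex set of the palm `S_n(a_1, …, a_n)`: a hub `none` and, for each leg
`i : Fin n` (representing leg `i+1`), vertices `j : Fin (a (i+1))`
(vertex `some ⟨i, j⟩` represents `a_{i+1, j+1}`). -/
def PalmVert (n : ℕ) (a : ℕ → ℕ) : Type :=
  Option ((i : Fin n) × Fin (a ((i : ℕ) + 1)))

/-- The palm `S_n(a_1, …, a_n)`: the star `K_{1,n}` whose `i`-th edge has been subdivided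
`a_i - 1` times; the hub is joined to the first vertex of each leg, and consecutive
vertices along a leg are adjacent. -/
def Palm (n : ℕ) (a : ℕ → ℕ) : SimpleGraph (PalmVert n a) :=
  SimpleGraph.fromRel fun u v =>
    match u, v with
    | none, some ⟨_, j⟩ => (j : ℕ) = 0
    | some ⟨i, j⟩, some ⟨i', j'⟩ => (i : ℕ) = (i' : ℕ) ∧ (j' : ℕ) = (j : ℕ) + 1
    | _, _ => False

section DistToSet

variable {V : Type*} {G : SimpleGraph V}

theorem distToSet_le_dist {S : Set V} {v : V} (hv : v ∈ S) (u : V) :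
    distToSet G u S ≤ G.dist u v :=
  Nat.sInf_le ⟨v, hv, rfl⟩

theorem exists_mem_distToSet_eq {S : Set V} (hS : S.Nonempty) (u : V) :
    ∃ v ∈ S, distToSet G u S = G.dist u v := by
  obtain ⟨v, hv, h⟩ := Nat.sInf_mem (hS.image (G.dist u))
  exact ⟨v, hv, h.symm⟩

theorem distToSet_eq_zero_of_mem {S : Set V} {u : V} (hu : u ∈ S) : distToSet G u S = 0 := by
  have := distToSet_le_dist (G := G) hu u
  simpa using this

theorem distToSet_pos (hG : G.Connected) {S : Set V} (hS : S.Nonempty) {u : V} (hu : u ∉ S) :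
    0 < distToSet G u S := by
  obtain ⟨v, hv, h⟩ := exists_mem_distToSet_eq (G := G) hS u
  rw [h]
  exact hG.pos_dist_of_ne fun h => hu (h ▸ hv)

theorem distToSet_le_of_adj (hG : G.Connected) (S : Set V) {u v : V} (h : G.Adj u v) :
    distToSet G u S ≤ distToSet G v S + 1 := by
  rcases S.eq_empty_or_nonempty with rfl | hS
  · simp [distToSet]
  · obtain ⟨w, hw, e⟩ := exists_mem_distToSet_eq (G := G) hS v
    have h₁ := distToSet_le_dist (G := G) hw u
    have h₂ : G.dist u w ≤ G.dist u v + G.dist v w := hG.dist_triangle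
    rw [SimpleGraph.dist_eq_one_iff_adj.2 h] at h₂
    omega

end DistToSet

section Counting

theorem nine_mul_two_pow_le (w : ℕ) : 9 * (w * 2 ^ w) ≤ 8 * 3 ^ w := by
  rcases lt_or_ge w 3 with h | h
  · interval_cases w <;> norm_num
  · induction w, h using Nat.le_induction with
    | base => norm_num
    | succ w hw ih =>
      have : (w + 1) * 2 ^ (w + 1) ≤ 3 * (w * 2 ^ w) := by
        rw [pow_succ]
        nlinarith [Nat.zero_le (2 ^ w)]
      rw [pow_succ 3]
      omega

/-- A locating coloring with `m` colors bounds the number of neighbors of any vertex. -/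
theorem IsLocatingColoring.card_neighbors_le {V : Type*} {G : SimpleGraph V} (hG : G.Connected)
    {m : ℕ} {c : V → Fin m} (hc : IsLocatingColoring G c) (x : V) {n : ℕ} (hn : 0 < n)
    (y : Fin n → V) (hy : Function.Injective y) (hxy : ∀ i, G.Adj x (y i)) :
    27 * n ≤ 4 * 3 ^ m := by
  classical
  set d : V → Fin m → ℕ := fun v t => distToSet G v (c ⁻¹' {t}) with hd
  have d_self (v : V) : d v (c v) = 0 := distToSet_eq_zero_of_mem rfl
  have d_pos (u v : V) (h : c u ≠ c v) : 0 < d u (c v) :=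
    distToSet_pos hG (S := c ⁻¹' {c v}) ⟨v, rfl⟩ h
  have d_le (u v : V) (t : Fin m) (h : G.Adj u v) : d u t ≤ d v t + 1 :=
    distToSet_le_of_adj hG _ h
  set A : Finset (Fin m) := Finset.univ.image fun i => c (y i) with hA
  have hxA : c x ∉ A := by
    simp only [hA, Finset.mem_image, Finset.mem_univ, true_and, not_exists]
    exact fun i h => hc.1 _ _ (hxy i) h.symm
  set X : Fin m → Fin m → Finset ℕ := fun s t =>
    if t = c x then {1} else if t = s then {0} else if t ∈ A then {1, 2}
      else Finset.Icc (d x t - 1) (d x t + 1) with hX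
  have mem_X (i : Fin n) : d (y i) ∈ Fintype.piFinset (X (c (y i))) := by
    rw [Fintype.mem_piFinset]
    intro t
    have h₁ := d_le _ _ t (hxy i)
    have h₂ := d_le _ _ t (hxy i).symm
    simp only [hX]
    split_ifs with ht hs hA'
    · subst ht
      have := d_pos (y i) x (hc.1 _ _ (hxy i).symm)
      rw [d_self] at h₂
      simp only [Finset.mem_singleton]
      omega
    · subst hs
      simp [d_self]
    · simp only [hA, Finset.mem_image, Finset.mem_univ, true_and] at hA'
      obtain ⟨j, rfl⟩ := hA'
      have h₃ := d_le _ _ (c (y j)) (hxy j)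
      rw [d_self] at h₃
      have := d_pos (y i) (y j) fun h => hs h.symm
      simp only [Finset.mem_insert, Finset.mem_singleton]
      omega
    · rw [Finset.mem_Icc]
      omega
  have card_le : n ≤ ∑ s ∈ A, (Fintype.piFinset (X s)).card := by
    have : (Finset.univ : Finset (Fin n)).card ≤
        (A.biUnion fun s => Fintype.piFinset (X s)).card := by
      apply Finset.card_le_card_of_injOn fun i => d (y i)
      · intro i _
        simp only [Finset.coe_biUnion, Set.mem_iUnion]
        exact ⟨c (y i), by simp [hA], mem_X i⟩
      · intro i _ j _ hij
        by_contra hne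
        obtain ⟨t, ht⟩ := hc.2 _ _ (hy.ne hne)
        exact ht (congrFun hij t)
    simpa using this.trans Finset.card_biUnion_le
  have card_X (s : Fin m) (hs : s ∈ A) :
      (Fintype.piFinset (X s)).card * 3 ^ (A.card + 1) ≤ 3 ^ m * 2 ^ (A.card - 1) := by
    rw [Fintype.card_piFinset]
    have e₁ : (∏ t : Fin m, if t ∈ insert (c x) A then 3 else 1) = 3 ^ (A.card + 1) := by
      rw [Finset.prod_ite_mem, Finset.univ_inter, Finset.prod_const,
        Finset.card_insert_of_notMem hxA]
    have e₂ : (∏ t : Fin m, 3 * (if t ∈ A.erase s then 2 else 1)) =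
        3 ^ m * 2 ^ (A.card - 1) := by
      rw [Finset.prod_mul_distrib, Finset.prod_ite_mem, Finset.univ_inter, Finset.prod_const,
        Finset.prod_const, Finset.card_erase_of_mem hs]
      simp
    rw [← e₁, ← e₂, ← Finset.prod_mul_distrib]
    apply Finset.prod_le_prod'
    intro t _
    simp only [hX, Finset.mem_insert, Finset.mem_erase]
    by_cases h₁ : t = c x
    · subst h₁
      simp [hxA]
    · by_cases h₂ : t = s
      · subst h₂
        simp [h₁, hs]
      · by_cases h₃ : t ∈ A
        · simp [h₁, h₂, h₃]
        · simp only [h₁, h₂, h₃, if_false, Nat.card_Icc, or_self, and_false]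
          omega
  have hA0 : 0 < A.card := Finset.card_pos.2 ⟨c (y ⟨0, hn⟩), by simp [hA]⟩
  have key : n * 3 ^ (A.card + 1) ≤ A.card * (3 ^ m * 2 ^ (A.card - 1)) := by
    calc n * 3 ^ (A.card + 1)
        ≤ (∑ s ∈ A, (Fintype.piFinset (X s)).card) * 3 ^ (A.card + 1) :=
          Nat.mul_le_mul_right _ card_le
      _ = ∑ s ∈ A, (Fintype.piFinset (X s)).card * 3 ^ (A.card + 1) := Finset.sum_mul ..
      _ ≤ ∑ s ∈ A, 3 ^ m * 2 ^ (A.card - 1) := Finset.sum_le_sum card_X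
      _ = _ := by simp
  obtain ⟨w, hw⟩ : ∃ w, A.card = w + 1 := ⟨A.card - 1, by omega⟩
  rw [hw] at key
  have h₁ := nine_mul_two_pow_le (w + 1)
  have h₂ : 0 < 3 ^ (w + 1 + 1) := by positivity
  refine Nat.le_of_mul_le_mul_right ?_ h₂
  calc 27 * n * 3 ^ (w + 1 + 1) = 27 * (n * 3 ^ (w + 1 + 1)) := by ring
    _ ≤ 27 * ((w + 1) * (3 ^ m * 2 ^ (w + 1 - 1))) := Nat.mul_le_mul_left _ key
    _ = 3 ^ m * (27 * ((w + 1) * 2 ^ w)) := by rw [Nat.add_sub_cancel]; ring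
    _ ≤ 3 ^ m * (4 * 3 ^ (w + 1 + 1)) := by
      apply Nat.mul_le_mul_left
      rw [pow_succ 2] at h₁
      rw [pow_succ 3 (w + 1)]
      nlinarith
    _ = 4 * 3 ^ m * 3 ^ (w + 1 + 1) := by ring

end Counting

namespace PalmVert

variable {n : ℕ} {a : ℕ → ℕ}

/-- The index of the leg containing a vertex (`0` for the hub). -/
def leg : PalmVert n a → ℕ
  | none => 0
  | some ⟨i, _⟩ => i

/-- The distance from a vertex to the hub. -/
def pos : PalmVert n a → ℕ
  | none => 0
  | some ⟨_, j⟩ => j + 1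

/-- The hub of a palm. -/
def hub : PalmVert n a := none

@[simp] theorem pos_hub : (hub : PalmVert n a).pos = 0 := rfl

theorem eq_hub_of_pos_eq_zero {v : PalmVert n a} (h : v.pos = 0) : v = hub := by
  rcases v with _ | ⟨i, j⟩
  · rfl
  · simp [pos] at h

theorem exists_of_pos_le {i p : ℕ} (hi : i < n) (hp : 0 < p) (hpa : p ≤ a (i + 1)) :
    ∃ v : PalmVert n a, v.leg = i ∧ v.pos = p :=
  ⟨some ⟨⟨i, hi⟩, ⟨p - 1, by simp only; omega⟩⟩, rfl, by simp only [pos]; omega⟩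

theorem leg_lt {v : PalmVert n a} (h : 0 < v.pos) : v.leg < n := by
  rcases v with _ | ⟨i, j⟩
  · simp [pos] at h
  · exact i.2

theorem pos_le {v : PalmVert n a} (h : 0 < v.pos) : v.pos ≤ a (v.leg + 1) := by
  rcases v with _ | ⟨i, j⟩
  · simp [pos] at h
  · exact j.2

theorem ext_leg_pos {u v : PalmVert n a} (hl : u.leg = v.leg) (hp : u.pos = v.pos) : u = v := by
  rcases u with _ | ⟨⟨i, hi⟩, ⟨j, hj⟩⟩ <;> rcases v with _ | ⟨⟨i', hi'⟩, ⟨j', hj'⟩⟩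
  · rfl
  · simp [pos] at hp
  · simp [pos] at hp
  · simp only [leg, pos, Nat.add_right_cancel_iff] at hl hp
    subst hl hp
    rfl

theorem adj_iff {u v : PalmVert n a} : (Palm n a).Adj u v ↔
    (u.pos + 1 = v.pos ∧ (u.pos = 0 ∨ u.leg = v.leg)) ∨
      (v.pos + 1 = u.pos ∧ (v.pos = 0 ∨ v.leg = u.leg)) := by
  rw [Palm, SimpleGraph.fromRel_adj]
  rcases u with _ | ⟨⟨i, hi⟩, ⟨j, hj⟩⟩ <;> rcases v with _ | ⟨⟨i', hi'⟩, ⟨j', hj'⟩⟩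
  · simp [pos]
  · simp [pos, leg, eq_comm]
    exact fun _ => (Option.some_ne_none _).symm
  · simp [pos, leg, eq_comm]
    exact fun _ => Option.some_ne_none _
  · have hne (h : j ≠ j') :
        (some ⟨⟨i, hi⟩, ⟨j, hj⟩⟩ : PalmVert n a) ≠ some ⟨⟨i', hi'⟩, ⟨j', hj'⟩⟩ :=
      fun e => h (Nat.succ_injective (congrArg pos e))
    simp only [pos, leg]
    constructor
    · rintro ⟨-, h | h⟩ <;> omega
    · rintro (h | h)
      · exact ⟨hne (by omega), .inl (by omega)⟩
      · exact ⟨hne (by omega), .inr (by omega)⟩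

/-- The distance between two vertices of a palm, in terms of legs and positions. -/
def metric (u v : PalmVert n a) : ℕ :=
  if u.leg = v.leg then (u.pos - v.pos) + (v.pos - u.pos) else u.pos + v.pos

theorem metric_comm (u v : PalmVert n a) : metric u v = metric v u := by
  simp only [metric, eq_comm (a := u.leg)]
  split_ifs <;> omega

theorem metric_le_of_adj (u : PalmVert n a) {v w : PalmVert n a} (h : (Palm n a).Adj v w) :
    metric u w ≤ metric u v + 1 := by
  rw [adj_iff] at h
  simp only [metric]
  split_ifs <;> omega

theorem exists_parent {v : PalmVert n a} (h : 0 < v.pos) :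
    ∃ w : PalmVert n a, w.pos + 1 = v.pos ∧ (w.pos = 0 ∨ w.leg = v.leg) := by
  rcases Nat.lt_or_ge 1 v.pos with h₁ | h₁
  · obtain ⟨w, hw⟩ := exists_of_pos_le (a := a) (p := v.pos - 1) (leg_lt h) (by omega)
      (by have := pos_le h; omega)
    exact ⟨w, by omega, by omega⟩
  · exact ⟨hub, by simp; omega, by simp⟩

theorem exists_walk_length_eq (u v : PalmVert n a) :
    ∃ p : (Palm n a).Walk u v, p.length = metric u v := by
  induction h : u.pos + v.pos generalizing u v with
  | zero =>
    obtain rfl : u = hub := eq_hub_of_pos_eq_zero (by omega)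
    obtain rfl : v = hub := eq_hub_of_pos_eq_zero (by omega)
    exact ⟨.nil, by simp [metric]⟩
  | succ N ih =>
    have extend (u v : PalmVert n a) (huv : u.pos + v.pos = N + 1) (hne : u ≠ v)
        (hle : u.pos ≤ v.pos) : ∃ p : (Palm n a).Walk u v, p.length = metric u v := by
      obtain ⟨w, hw, hwl⟩ := exists_parent (v := v) (by omega)
      obtain ⟨p, hp⟩ := ih u w (by omega)
      refine ⟨p.concat (adj_iff.2 (.inl ⟨hw, hwl⟩)), ?_⟩
      have : u.leg = v.leg → u.pos ≠ v.pos := fun h₁ h₂ => hne (ext_leg_pos h₁ h₂)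
      rw [SimpleGraph.Walk.length_concat, hp]
      simp only [metric]
      split_ifs <;> omega
    by_cases hne : u = v
    · subst hne
      exact ⟨.nil, by simp [metric]⟩
    · rcases le_total u.pos v.pos with hle | hle
      · exact extend u v h hne hle
      · obtain ⟨p, hp⟩ := extend v u (by omega) (Ne.symm hne) hle
        exact ⟨p.reverse, by rw [SimpleGraph.Walk.length_reverse, hp, metric_comm]⟩

theorem connected : (Palm n a).Connected :=
  have : Nonempty (PalmVert n a) := ⟨hub⟩
  ⟨fun u v => (exists_walk_length_eq u v).choose.reachable⟩

theorem metric_le_length {u v : PalmVert n a} (p : (Palm n a).Walk u v) :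
    metric u v ≤ p.length := by
  induction p using SimpleGraph.Walk.concatRec with
  | Hnil => simp [metric]
  | Hconcat p h ih =>
    rw [SimpleGraph.Walk.length_concat]
    exact (metric_le_of_adj _ h).trans (by omega)

theorem dist_eq (u v : PalmVert n a) : (Palm n a).dist u v = metric u v := by
  apply le_antisymm
  · obtain ⟨p, hp⟩ := exists_walk_length_eq u v
    exact hp ▸ SimpleGraph.dist_le p
  · obtain ⟨p, hp⟩ := (connected (a := a)).exists_walk_length_eq_dist u v
    exact hp ▸ metric_le_length p

end PalmVert

section PalmColoring

/-- The `j`-th base three digit of `i / 4`. -/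
def legDigit (i j : ℕ) : ℕ := i / 4 / 3 ^ j % 3

/-- The colors used on legs of the four types `r = i % 4`, at positions of parity `e`. -/
def baseColor (r e : ℕ) : ℕ :=
  if e = 1 then (if r % 2 = 0 then 1 else 2) else if r < 2 then 0 else if r = 2 then 2 else 1

/-- A coloring of palms: the hub gets color `0`, leg `i` alternates between two of the colors
`0, 1, 2` according to `i % 4`, except that color `3 + j` is used once, at position `2 * j + 3`
or `2 * j + 4`, when the `j`-th base three digit of `i / 4` is `1` or `2`. -/
def palmColor (i p : ℕ) : ℕ :=
  if p = 0 then 0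
  else if 3 ≤ p ∧ legDigit i ((p - 3) / 2) = 1 + (p - 3) % 2 then 3 + (p - 3) / 2
  else baseColor (i % 4) (p % 2)

theorem legDigit_lt (i j : ℕ) : legDigit i j < 3 := Nat.mod_lt _ (by norm_num)

theorem baseColor_lt (r e : ℕ) : baseColor r e < 3 := by
  unfold baseColor
  split_ifs <;> norm_num

theorem palmColor_zero (i : ℕ) : palmColor i 0 = 0 := rfl

theorem palmColor_eq_three_add_iff {i p j : ℕ} :
    palmColor i p = 3 + j ↔ legDigit i j ≠ 0 ∧ p = 2 * j + 2 + legDigit i j := by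
  have hd := legDigit_lt i j
  have hb := baseColor_lt (i % 4) (p % 2)
  unfold palmColor
  split_ifs with h₀ h
  · omega
  · constructor
    · intro e
      obtain rfl : (p - 3) / 2 = j := by omega
      omega
    · rintro ⟨h₁, h₂⟩
      omega
  · constructor
    · intro e
      omega
    · rintro ⟨h₁, h₂⟩
      refine absurd ⟨by omega, ?_⟩ h
      have : (p - 3) / 2 = j := by omega
      rw [this]
      omega

theorem palmColor_of_lt_three {i p : ℕ} (hp : 0 < p) (h : palmColor i p < 3) :
    palmColor i p = baseColor (i % 4) (p % 2) := by
  unfold palmColor at h ⊢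
  split_ifs at h ⊢ <;> omega

theorem palmColor_of_pos_lt_three {i p : ℕ} (hp : 0 < p) (h : p < 3) :
    palmColor i p = baseColor (i % 4) (p % 2) := by
  unfold palmColor
  rw [if_neg (by omega), if_neg (by omega)]

theorem palmColor_ne_succ (i p : ℕ) : palmColor i p ≠ palmColor i (p + 1) := by
  intro h
  rcases Nat.lt_or_ge (palmColor i p) 3 with h₃ | h₃
  · have h₁ := palmColor_of_lt_three (by omega) (h ▸ h₃)
    rcases Nat.eq_zero_or_pos p with rfl | hp
    · rw [← h, palmColor_zero] at h₁
      simp only [baseColor] at h₁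
      split_ifs at h₁
    · rw [← h, palmColor_of_lt_three hp h₃] at h₁
      have : p % 2 = 0 ∧ (p + 1) % 2 = 1 ∨ p % 2 = 1 ∧ (p + 1) % 2 = 0 := by omega
      have : i % 4 < 4 := Nat.mod_lt _ (by norm_num)
      simp only [baseColor] at h₁
      split_ifs at h₁ <;> omega
  · obtain ⟨j, hj⟩ := Nat.exists_eq_add_of_le h₃
    have h₁ := (palmColor_eq_three_add_iff.1 hj).2
    have h₂ := (palmColor_eq_three_add_iff.1 (h ▸ hj)).2
    omega

theorem eq_of_forall_digit_eq {k x y : ℕ} (hx : x < 3 ^ k) (hy : y < 3 ^ k)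
    (h : ∀ j < k, x / 3 ^ j % 3 = y / 3 ^ j % 3) : x = y := by
  induction k generalizing x y with
  | zero => simp_all
  | succ k ih =>
    have h₀ := h 0 (by omega)
    have : x / 3 = y / 3 := by
      rw [pow_succ] at hx hy
      refine ih (by omega) (by omega) fun j hj => ?_
      have := h (j + 1) (by omega)
      rwa [pow_succ', ← Nat.div_div_eq_div_mul, ← Nat.div_div_eq_div_mul] at this
    simp only [pow_zero, Nat.div_one] at h₀
    omega

theorem legDigit_mul_three_pow_le (i j : ℕ) :
    legDigit i j * 3 ^ j ≤ i / 4 := by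
  have : legDigit i j ≤ i / 4 / 3 ^ j := Nat.mod_le _ _
  exact (Nat.le_div_iff_mul_le (by positivity)).1 this

end PalmColoring

namespace PalmVert

variable {n : ℕ} {a : ℕ → ℕ}

/-- The coloring `palmColor` on the vertices of a palm. -/
def color (v : PalmVert n a) : ℕ := palmColor v.leg v.pos

/-- The distance from a vertex to the color class `t` of `color`. -/
noncomputable def colorDist (t : ℕ) (v : PalmVert n a) : ℕ :=
  distToSet (Palm n a) v {w | w.color = t}

theorem metric_eq_of_leg_eq {u v : PalmVert n a} (h : u.leg = v.leg) :
    metric u v = (u.pos - v.pos) + (v.pos - u.pos) := if_pos h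

theorem metric_eq_of_leg_ne {u v : PalmVert n a} (h : u.leg ≠ v.leg) :
    metric u v = u.pos + v.pos := if_neg h

theorem colorDist_le {t : ℕ} (u : PalmVert n a) {v : PalmVert n a} (hv : v.color = t) :
    colorDist t u ≤ metric u v :=
  dist_eq u v ▸ distToSet_le_dist (S := {w : PalmVert n a | w.color = t}) hv u

theorem exists_colorDist_eq {t : ℕ} (u : PalmVert n a) {w : PalmVert n a} (hw : w.color = t) :
    ∃ v : PalmVert n a, v.color = t ∧ colorDist t u = metric u v := by
  obtain ⟨v, hv, h⟩ := exists_mem_distToSet_eq (G := Palm n a)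
    (S := {w : PalmVert n a | w.color = t}) ⟨w, hw⟩ u
  exact ⟨v, hv, h.trans (dist_eq u v)⟩

theorem color_hub : (hub : PalmVert n a).color = 0 := rfl

theorem color_ne_of_adj {u v : PalmVert n a} (h : (Palm n a).Adj u v) : u.color ≠ v.color := by
  have aux {u v : PalmVert n a} (hp : u.pos + 1 = v.pos) (hl : u.pos = 0 ∨ u.leg = v.leg) :
      u.color ≠ v.color := by
    have := palmColor_ne_succ v.leg u.pos
    rw [color, color, ← hp]
    rcases hl with hl | hl
    · rw [hl, palmColor_zero] at this ⊢
      exact this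
    · rwa [hl]
  rcases adj_iff.1 h with ⟨hp, hl⟩ | ⟨hp, hl⟩
  · exact aux hp hl
  · exact (aux hp hl).symm

theorem colorDist_zero_le (u : PalmVert n a) : colorDist 0 u ≤ u.pos := by
  refine (colorDist_le u color_hub).trans ?_
  simp only [metric, pos_hub]
  split_ifs
  all_goals omega

theorem colorDist_zero_eq {u : PalmVert n a} (hr : 2 ≤ u.leg % 4) : colorDist 0 u = u.pos := by
  refine le_antisymm (colorDist_zero_le u) ?_
  obtain ⟨v, hv, h⟩ := exists_colorDist_eq u color_hub
  rw [h]
  by_cases hl : u.leg = v.leg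
  · rcases Nat.eq_zero_or_pos v.pos with h₀ | h₀
    · rw [metric_eq_of_leg_eq hl]
      omega
    · have hb := palmColor_of_lt_three h₀ (hv.trans_lt (by norm_num))
      rw [color] at hv
      rw [hv, ← hl] at hb
      simp only [baseColor] at hb
      split_ifs at hb
      omega
  · rw [metric_eq_of_leg_ne hl]
    omega

theorem exists_color_eq_pos_eq_one (hn : 2 ≤ n) (ha : ∀ i < n, 1 ≤ a (i + 1)) {t : ℕ}
    (ht : t = 1 ∨ t = 2) : ∃ w : PalmVert n a, w.pos = 1 ∧ w.color = t := by
  obtain ⟨w, hl, hp⟩ := exists_of_pos_le (n := n) (a := a) (i := t - 1) (p := 1) (by omega)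
    (by omega) (ha _ (by omega))
  refine ⟨w, hp, ?_⟩
  rw [color, hl, hp, palmColor_of_pos_lt_three (by omega) (by omega)]
  rcases ht with rfl | rfl <;> rfl

theorem colorDist_le_pos_add_one (hn : 2 ≤ n) (ha : ∀ i < n, 1 ≤ a (i + 1)) {t : ℕ}
    (ht : t = 1 ∨ t = 2) (u : PalmVert n a) : colorDist t u ≤ u.pos + 1 := by
  obtain ⟨w, hp, hw⟩ := exists_color_eq_pos_eq_one hn ha ht
  refine (colorDist_le _ hw).trans ?_
  simp only [metric, hp]
  split_ifs <;> omega

theorem lt_colorDist (hn : 2 ≤ n) (ha : ∀ i < n, 1 ≤ a (i + 1)) {t : ℕ} (ht : t = 1 ∨ t = 2)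
    {u : PalmVert n a} (hr : u.leg % 4 + t = 2) : u.pos < colorDist t u := by
  obtain ⟨w, -, hw⟩ := exists_color_eq_pos_eq_one hn ha ht
  obtain ⟨v, hv, h⟩ := exists_colorDist_eq u hw
  rw [h]
  rw [color] at hv
  have h₀ : 0 < v.pos := by
    by_contra h₀
    rw [Nat.eq_zero_of_not_pos h₀, palmColor_zero] at hv
    omega
  by_cases hl : u.leg = v.leg
  · have hb := palmColor_of_lt_three h₀ (hv.trans_lt (by omega))
    rw [hv, ← hl] at hb
    simp only [baseColor] at hb
    split_ifs at hb <;> omega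
  · rw [metric_eq_of_leg_ne hl]
    omega

theorem colorDist_le_pos (ha : ∀ i < n, 1 ≤ a (i + 1)) (ha₂ : ∀ i < n, 2 ≤ i → 2 ≤ a (i + 1))
    {t : ℕ} (ht : t = 1 ∨ t = 2) {u : PalmVert n a} (hu : 0 < u.pos) (hr : u.leg % 4 + t ≠ 2) :
    (∃ w : PalmVert n a, w.color = t) ∧ colorDist t u ≤ u.pos := by
  have hlt := leg_lt hu
  obtain ⟨p, hp₀, hp₃, hp, hpt⟩ : ∃ p, 0 < p ∧ p < 3 ∧ p ≤ a (u.leg + 1) ∧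
      baseColor (u.leg % 4) (p % 2) = t := by
    have h₁ := ha _ hlt
    have h₂ := ha₂ _ hlt
    by_cases h : baseColor (u.leg % 4) 1 = t
    · exact ⟨1, by omega, by omega, by omega, h⟩
    · have h₃ : u.leg % 4 = 2 ∧ t = 2 ∨ u.leg % 4 = 3 ∧ t = 1 := by
        simp only [baseColor, if_true] at h
        split_ifs at h <;> omega
      refine ⟨2, by omega, by omega, by omega, ?_⟩
      rcases h₃ with ⟨h₃, rfl⟩ | ⟨h₃, rfl⟩ <;> simp [h₃, baseColor]
  obtain ⟨w, hwl, hwp⟩ := exists_of_pos_le hlt hp₀ hp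
  have hw : w.color = t := by rw [color, hwl, hwp, palmColor_of_pos_lt_three hp₀ hp₃, hpt]
  refine ⟨⟨w, hw⟩, (colorDist_le _ hw).trans ?_⟩
  rw [metric_eq_of_leg_eq hwl.symm]
  omega

theorem colorDist_one_mod_two (ha : ∀ i < n, 1 ≤ a (i + 1))
    (ha₂ : ∀ i < n, 2 ≤ i → 2 ≤ a (i + 1)) {u : PalmVert n a} (hu : 0 < u.pos)
    (hr : 2 ≤ u.leg % 4) : colorDist 1 u % 2 = (u.pos + u.leg % 4 + 1) % 2 := by
  obtain ⟨⟨w, hw⟩, hle⟩ := colorDist_le_pos ha ha₂ (.inl rfl) hu (by omega)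
  obtain ⟨v, hv, h⟩ := exists_colorDist_eq u hw
  rw [h] at hle ⊢
  rw [color] at hv
  have h₀ : 0 < v.pos := by
    by_contra h₀
    rw [Nat.eq_zero_of_not_pos h₀, palmColor_zero] at hv
    omega
  by_cases hl : u.leg = v.leg
  · have hb := palmColor_of_lt_three h₀ (hv.trans_lt (by omega))
    rw [hv, ← hl] at hb
    rw [metric_eq_of_leg_eq hl]
    simp only [baseColor] at hb
    split_ifs at hb <;> omega
  · rw [metric_eq_of_leg_ne hl] at hle
    omega

theorem le_colorDist_of_legDigit_eq_zero {j : ℕ} {w u : PalmVert n a} (hw : w.color = 3 + j)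
    (h₀ : legDigit u.leg j = 0) : u.pos + 2 * j + 3 ≤ colorDist (3 + j) u := by
  obtain ⟨v, hv, h⟩ := exists_colorDist_eq u hw
  have hc := palmColor_eq_three_add_iff.1 hv
  rw [h, metric_eq_of_leg_ne fun hl => hc.1 (hl ▸ h₀)]
  omega

theorem colorDist_of_legDigit_ne_zero
    (hdig : ∀ i < n, ∀ j, legDigit i j ≠ 0 → 2 * j + 2 + legDigit i j ≤ a (i + 1))
    {j : ℕ} {u : PalmVert n a} (hu : 0 < u.pos) (h₀ : legDigit u.leg j ≠ 0) :
    colorDist (3 + j) u = (u.pos - (2 * j + 2 + legDigit u.leg j)) +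
      (2 * j + 2 + legDigit u.leg j - u.pos) := by
  have h₃ := legDigit_lt u.leg j
  obtain ⟨w, hwl, hwp⟩ := exists_of_pos_le (leg_lt hu) (by omega) (hdig _ (leg_lt hu) j h₀)
  have hw : w.color = 3 + j := palmColor_eq_three_add_iff.2 ⟨hwl ▸ h₀, by rw [hwp, hwl]⟩
  have hle := colorDist_le u hw
  rw [metric_eq_of_leg_eq hwl.symm, hwp] at hle
  obtain ⟨v, hv, h⟩ := exists_colorDist_eq u hw
  have hc := palmColor_eq_three_add_iff.1 hv
  by_cases hl : u.leg = v.leg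
  · rw [h, metric_eq_of_leg_eq hl, hc.2, hl]
  · rw [h, metric_eq_of_leg_ne hl] at hle
    omega

theorem pos_eq_and_leg_mod_four_eq (hn : 2 ≤ n) (ha : ∀ i < n, 1 ≤ a (i + 1))
    (ha₂ : ∀ i < n, 2 ≤ i → 2 ≤ a (i + 1)) {u v : PalmVert n a}
    (h : ∀ t < 3, colorDist t u = colorDist t v) (hu : 0 < u.pos) :
    u.pos = v.pos ∧ u.leg % 4 = v.leg % 4 := by
  have h₀ := h 0 (by norm_num)
  have h₁ := h 1 (by norm_num)
  have h₂ := h 2 (by norm_num)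
  have hit (w : PalmVert n a) (t : ℕ) (ht : t = 1 ∨ t = 2) (hw : 0 < w.pos)
      (hr : w.leg % 4 + t ≠ 2) := (colorDist_le_pos ha ha₂ ht hw hr).2
  have miss (w : PalmVert n a) (t : ℕ) (ht : t = 1 ∨ t = 2) (hr : w.leg % 4 + t = 2) :=
    lt_colorDist hn ha ht hr
  have near (w : PalmVert n a) (t : ℕ) (ht : t = 1 ∨ t = 2) :=
    colorDist_le_pos_add_one hn ha ht w
  have far (w : PalmVert n a) (hr : 2 ≤ w.leg % 4) := colorDist_zero_eq hr
  rcases Nat.eq_zero_or_pos v.pos with hv | hv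
  · obtain rfl := eq_hub_of_pos_eq_zero hv
    have c₁ := near hub 1 (.inl rfl)
    have c₂ := near hub 2 (.inr rfl)
    have c₀ := colorDist_zero_le (hub : PalmVert n a)
    have := miss u 1
    have := miss u 2
    have := far u
    rw [pos_hub] at c₀ c₁ c₂
    omega
  · have := hit u 1 (.inl rfl) hu
    have := hit u 2 (.inr rfl) hu
    have := hit v 1 (.inl rfl) hv
    have := hit v 2 (.inr rfl) hv
    have := miss u 1 (.inl rfl)
    have := miss u 2 (.inr rfl)
    have := miss v 1 (.inl rfl)
    have := miss v 2 (.inr rfl)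
    have := near u 1 (.inl rfl)
    have := near u 2 (.inr rfl)
    have := near v 1 (.inl rfl)
    have := near v 2 (.inr rfl)
    have := far u
    have := far v
    have := colorDist_zero_le u
    have := colorDist_zero_le v
    have := colorDist_one_mod_two ha ha₂ hu
    have := colorDist_one_mod_two ha ha₂ hv
    have : u.leg % 4 < 4 := Nat.mod_lt _ (by norm_num)
    have : v.leg % 4 < 4 := Nat.mod_lt _ (by norm_num)
    generalize u.leg % 4 = r at *
    generalize v.leg % 4 = s at *
    interval_cases r <;> interval_cases s <;> omega

theorem legDigit_eq
    (hdig : ∀ i < n, ∀ j, legDigit i j ≠ 0 → 2 * j + 2 + legDigit i j ≤ a (i + 1))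
    {j : ℕ} {u v w : PalmVert n a} (hw : w.color = 3 + j) (hu : 0 < u.pos) (hp : u.pos = v.pos)
    (h : colorDist (3 + j) u = colorDist (3 + j) v) : legDigit u.leg j = legDigit v.leg j := by
  have h₁ := legDigit_lt u.leg j
  have h₂ := legDigit_lt v.leg j
  have u₀ := le_colorDist_of_legDigit_eq_zero (u := u) hw
  have v₀ := le_colorDist_of_legDigit_eq_zero (u := v) hw
  have u₁ := colorDist_of_legDigit_ne_zero hdig (j := j) hu
  have v₁ := colorDist_of_legDigit_ne_zero hdig (j := j) (hp ▸ hu)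
  by_cases hu₀ : legDigit u.leg j = 0 <;> by_cases hv₀ : legDigit v.leg j = 0
  · rw [hu₀, hv₀]
  · specialize u₀ hu₀
    specialize v₁ hv₀
    omega
  · specialize u₁ hu₀
    specialize v₀ hv₀
    omega
  · specialize u₁ hu₀
    specialize v₁ hv₀
    omega

theorem exists_isLocatingColoring (hn : 2 ≤ n) {k : ℕ} (hk : n ≤ 4 * 3 ^ k)
    (hk' : ∀ j < k, 4 * 3 ^ j < n) (ha : ∀ i < n, 1 ≤ a (i + 1))
    (ha₂ : ∀ i < n, 2 ≤ i → 2 ≤ a (i + 1))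
    (hdig : ∀ i < n, ∀ j, legDigit i j ≠ 0 → 2 * j + 2 + legDigit i j ≤ a (i + 1)) :
    ∃ c : PalmVert n a → Fin (k + 3), IsLocatingColoring (Palm n a) c := by
  have hlt (i : ℕ) (hi : i < n) : i / 4 < 3 ^ k := by omega
  have color_lt (v : PalmVert n a) : v.color < k + 3 := by
    by_contra hc
    obtain ⟨j, hj⟩ := Nat.exists_eq_add_of_le (show 3 ≤ v.color by omega)
    have h := palmColor_eq_three_add_iff.1 hj
    have h₁ := legDigit_mul_three_pow_le v.leg j
    have h₂ := hlt _ (leg_lt (v := v) (by omega))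
    have h₃ : 3 ^ k ≤ 3 ^ j := Nat.pow_le_pow_right (by norm_num) (by omega)
    have h₄ := Nat.le_mul_of_pos_left (3 ^ j) (Nat.pos_of_ne_zero h.1)
    omega
  have exists_color (j : ℕ) (hj : j < k) : ∃ w : PalmVert n a, w.color = 3 + j := by
    have hd : legDigit (4 * 3 ^ j) j = 1 := by
      rw [legDigit, Nat.mul_div_cancel_left _ (by norm_num), Nat.div_self (by positivity)]
    have hle := hdig _ (hk' j hj) j (by omega)
    obtain ⟨w, hwl, hwp⟩ := exists_of_pos_le (hk' j hj) (by omega) hle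
    exact ⟨w, palmColor_eq_three_add_iff.2 ⟨by rw [hwl]; omega, by rw [hwp, hwl]⟩⟩
  refine ⟨fun v => ⟨v.color, color_lt v⟩, fun u v h e => ?_, fun u v hne => ?_⟩
  · exact color_ne_of_adj h (Fin.mk.inj e)
  · by_contra! h
    have hc (t : ℕ) (ht : t < k + 3) : colorDist t u = colorDist t v := by
      simpa [colorDist, Set.preimage, Fin.ext_iff] using h ⟨t, ht⟩
    have main {u v : PalmVert n a} (hc : ∀ t < k + 3, colorDist t u = colorDist t v)
        (hu : 0 < u.pos) : u = v := by
      obtain ⟨hp, hr⟩ := pos_eq_and_leg_mod_four_eq hn ha ha₂ (fun t ht => hc t (by omega)) hu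
      refine ext_leg_pos ?_ hp
      have : u.leg / 4 = v.leg / 4 := by
        refine eq_of_forall_digit_eq (hlt _ (leg_lt hu)) (hlt _ (leg_lt (hp ▸ hu))) ?_
        intro j hj
        obtain ⟨w, hw⟩ := exists_color j hj
        exact legDigit_eq hdig hw hu hp (hc _ (by omega))
      omega
    rcases Nat.eq_zero_or_pos u.pos with hu | hu
    · rcases Nat.eq_zero_or_pos v.pos with hv | hv
      · exact hne ((eq_hub_of_pos_eq_zero hu).trans (eq_hub_of_pos_eq_zero hv).symm)
      · exact hne (main (fun t ht => (hc t ht).symm) hv).symm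
    · exact hne (main hc hu)

theorem le_of_isLocatingColoring (hn : 2 ≤ n) (ha : ∀ i < n, 1 ≤ a (i + 1)) {m : ℕ}
    {c : PalmVert n a → Fin m} (hc : IsLocatingColoring (Palm n a) c) : 27 * n ≤ 4 * 3 ^ m := by
  choose y hl hp using fun i : Fin n => exists_of_pos_le i.2 one_pos (ha i i.2)
  refine hc.card_neighbors_le connected hub (by omega) y (fun i j h => ?_) fun i => ?_
  · exact Fin.ext ((hl i).symm.trans ((congrArg leg h).trans (hl j)))
  · exact adj_iff.2 (.inl ⟨by rw [hp, pos_hub, zero_add], .inl rfl⟩)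

end PalmVert

theorem exists_four_mul_three_pow (n : ℕ) (hn : 2 ≤ n) :
    ∃ k : ℕ, n ≤ 4 * 3 ^ k ∧ (∀ j < k, 4 * 3 ^ j < n) ∧
      ⌈Real.logb 3 ((n : ℝ) / 4)⌉ = k := by
  have hex : ∃ k : ℕ, n ≤ 4 * 3 ^ k :=
    ⟨n, by have := (Nat.lt_pow_self (n := n) (show 1 < 3 by norm_num)); omega⟩
  have hmin (j : ℕ) (hj : j < Nat.find hex) : 4 * 3 ^ j < n := not_le.1 (Nat.find_min hex hj)
  refine ⟨Nat.find hex, Nat.find_spec hex, hmin, ?_⟩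
  have hspec := Nat.find_spec hex
  generalize Nat.find hex = k at hmin hspec ⊢
  have hn' : (2 : ℝ) ≤ n := by exact_mod_cast hn
  have hpos : (0 : ℝ) < (n : ℝ) / 4 := by positivity
  rw [Int.ceil_eq_iff, Real.logb_le_iff_le_rpow (by norm_num) hpos,
    Real.lt_logb_iff_rpow_lt (by norm_num) hpos]
  constructor
  · rcases k with _ | k
    · norm_num [Real.rpow_neg_one]
      linarith
    · have : (4 : ℝ) * 3 ^ k < n := by exact_mod_cast hmin k (by omega)
      have e : ((k + 1 : ℕ) : ℤ) - (1 : ℝ) = (k : ℝ) := by push_cast; ring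
      rw [e, Real.rpow_natCast]
      linarith
  · have : (n : ℝ) ≤ 4 * 3 ^ k := by exact_mod_cast hspec
    rw [Int.cast_natCast, Real.rpow_natCast]
    linarith

/-- Let `n ≥ 2` and `G = S_n(a_1, …, a_n)` be a palm with
`1 ≤ a_1 ≤ a_2 ≤ ⋯ ≤ a_n`. If `a_3 ≥ 2` and, for every nonnegative integer
`k ≤ log_3(n/4)`, `a_{4·3^k + 1} ≥ 2k + 3` and `a_{8·3^k + 1} ≥ 2k + 4`, then
`χ_L(G) = ⌈log_3(n/4)⌉ + 3`. -/
theorem locatingChromaticNumber_palm_eq_of_long_legs (n : ℕ) (hn : 2 ≤ n) (a : ℕ → ℕ)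
    (ha₁ : 1 ≤ a 1)
    (hmono : ∀ i j, 1 ≤ i → i ≤ j → j ≤ n → a i ≤ a j)
    (ha₃ : 2 ≤ a 3)
    (hlong : ∀ k : ℕ, (k : ℝ) ≤ Real.logb 3 ((n : ℝ) / 4) →
      2 * k + 3 ≤ a (4 * 3 ^ k + 1) ∧ 2 * k + 4 ≤ a (8 * 3 ^ k + 1)) :
    (locatingChromaticNumber (Palm n a) : ℤ) = ⌈Real.logb 3 ((n : ℝ) / 4)⌉ + 3 := by
  obtain ⟨k, hk, hk', hceil⟩ := exists_four_mul_three_pow n hn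
  have hlog (j : ℕ) (hj : 4 * 3 ^ j ≤ n) : (j : ℝ) ≤ Real.logb 3 ((n : ℝ) / 4) := by
    have h : (4 : ℝ) * 3 ^ j ≤ n := by exact_mod_cast hj
    rw [Real.le_logb_iff_rpow_le (by norm_num) (by positivity), Real.rpow_natCast]
    linarith
  have ha (i : ℕ) (hi : i < n) : 1 ≤ a (i + 1) :=
    ha₁.trans (hmono 1 (i + 1) le_rfl (by omega) (by omega))
  have ha₂ (i : ℕ) (hi : i < n) (h : 2 ≤ i) : 2 ≤ a (i + 1) :=
    ha₃.trans (hmono 3 (i + 1) (by omega) (by omega) (by omega))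
  have hdig (i : ℕ) (hi : i < n) (j : ℕ) (h : legDigit i j ≠ 0) :
      2 * j + 2 + legDigit i j ≤ a (i + 1) := by
    have h₃ := legDigit_lt i j
    have hle := legDigit_mul_three_pow_le i j
    obtain hd | hd : legDigit i j = 1 ∨ legDigit i j = 2 := by omega
    · rw [hd] at hle ⊢
      have := (hlong j (hlog j (by omega))).1
      have := hmono (4 * 3 ^ j + 1) (i + 1) (by omega) (by omega) (by omega)
      omega
    · rw [hd] at hle ⊢
      have := (hlong j (hlog j (by omega))).2
      have := hmono (8 * 3 ^ j + 1) (i + 1) (by omega) (by omega) (by omega)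
      omega
  have hmem : k + 3 ∈ {k : ℕ | ∃ c : PalmVert n a → Fin k, IsLocatingColoring (Palm n a) c} :=
    PalmVert.exists_isLocatingColoring hn hk hk' ha ha₂ hdig
  have heq : locatingChromaticNumber (Palm n a) = k + 3 := by
    refine le_antisymm (Nat.sInf_le hmem) (le_csInf ⟨_, hmem⟩ ?_)
    rintro m ⟨c, hc⟩
    have h := PalmVert.le_of_isLocatingColoring hn ha hc
    by_contra! hlt
    rcases k with _ | k
    · have : 3 ^ m ≤ 3 ^ 2 := Nat.pow_le_pow_right (by norm_num) (by omega)
      omega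
    · have h₁ : 3 ^ m ≤ 3 ^ (k + 3) := Nat.pow_le_pow_right (by norm_num) (by omega)
      have h₂ := hk' k (by omega)
      rw [pow_add] at h₁
      omega
  rw [heq, hceil]
  push_cast
  ring
end

section
/- Fix a positive integer k. For every n ≥ 3, χ_L(S_n(k)) ≥ χ_L(S_{n−1}(k)); that is, n ↦ χ_L(S_n(k)) is a weakly increasing function of n. -/
open SimpleGraph

/-- A function that vanishes only at `u`, is `1`-Lipschitz along edges and has a descent direction
at each vertex other than `u` is the distance from `u`. -/
theorem dist_eq_of_descent {V : Type*} {G : SimpleGraph V} {u : V} {f : V → ℕ}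
    (h_zero : ∀ v, f v = 0 ↔ v = u) (h_lip : ∀ v w, G.Adj v w → f w ≤ f v + 1)
    (h_desc : ∀ v, f v ≠ 0 → ∃ w, G.Adj w v ∧ f v = f w + 1) (v : V) : G.dist u v = f v := by
  have upper : ∀ d v, f v = d → ∃ p : G.Walk u v, p.length = d := by
    intro d
    induction d with
    | zero =>
      intro v hv
      obtain rfl := (h_zero v).1 hv
      exact ⟨.nil, rfl⟩
    | succ d ih =>
      intro v hv
      obtain ⟨w, hw, h⟩ := h_desc v (by omega)
      obtain ⟨p, hp⟩ := ih w (by omega)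
      exact ⟨p.concat hw, by simp [hp]⟩
  have lower : ∀ x y (p : G.Walk x y), f y ≤ f x + p.length := by
    intro x y p
    induction p with
    | nil => simp
    | cons h p ih =>
      have := h_lip _ _ h
      simp only [Walk.length_cons]
      omega
  obtain ⟨p, hp⟩ := upper _ v rfl
  refine le_antisymm (hp ▸ dist_le p) ?_
  obtain ⟨q, hq⟩ := p.reachable.exists_walk_length_eq_dist
  have := lower _ _ q
  have := (h_zero u).2 rfl
  omega

/-- The hub of a palm. -/
def PalmVert.hub_s10 {n : ℕ} {a : ℕ → ℕ} : PalmVert n a := none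

/-- The vertex of a palm at position `j` of the leg `i`. -/
def PalmVert.leg_s10 {n : ℕ} {a : ℕ → ℕ} (i : Fin n) (j : Fin (a ((i : ℕ) + 1))) : PalmVert n a :=
  some ⟨i, j⟩

open PalmVert

theorem PalmVert.eq_hub_or_leg {n : ℕ} {a : ℕ → ℕ} (v : PalmVert n a) :
    v = hub_s10 ∨ ∃ i j, v = leg_s10 i j :=
  match v with
  | none => .inl rfl
  | some ⟨i, j⟩ => .inr ⟨i, j, rfl⟩

@[simp]
theorem PalmVert.leg_inj {n : ℕ} {a : ℕ → ℕ} {i i' : Fin n} {j : Fin (a ((i : ℕ) + 1))}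
    {j' : Fin (a ((i' : ℕ) + 1))} :
    (leg_s10 i j : PalmVert n a) = leg_s10 i' j' ↔ i = i' ∧ (j : ℕ) = j' := by
  constructor
  · intro h
    cases h
    exact ⟨rfl, rfl⟩
  · rintro ⟨rfl, h⟩
    rw [Fin.ext h]

@[simp]
theorem PalmVert.leg_ne_hub {n : ℕ} {a : ℕ → ℕ} {i : Fin n} {j : Fin (a ((i : ℕ) + 1))} :
    (leg_s10 i j : PalmVert n a) ≠ hub_s10 :=
  nofun

@[simp]
theorem PalmVert.hub_ne_leg {n : ℕ} {a : ℕ → ℕ} {i : Fin n} {j : Fin (a ((i : ℕ) + 1))} :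
    (hub_s10 : PalmVert n a) ≠ leg_s10 i j :=
  nofun

/-- The explicit distance function of a palm. -/
def palmDist {n : ℕ} {a : ℕ → ℕ} : PalmVert n a → PalmVert n a → ℕ
  | none, none => 0
  | none, some ⟨_, j⟩ => j + 1
  | some ⟨_, j⟩, none => j + 1
  | some ⟨i, j⟩, some ⟨i', j'⟩ =>
    if i = i' then ((j : ℕ) - j') + ((j' : ℕ) - j) else (j : ℕ) + j' + 2

section palmDist

variable {n : ℕ} {a : ℕ → ℕ} (i i' : Fin n) (j : Fin (a ((i : ℕ) + 1)))
  (j' : Fin (a ((i' : ℕ) + 1)))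

@[simp]
theorem palmDist_hub_hub : palmDist (hub_s10 : PalmVert n a) hub_s10 = 0 := rfl

@[simp]
theorem palmDist_hub_leg : palmDist (hub_s10 : PalmVert n a) (leg_s10 i j) = j + 1 := rfl

@[simp]
theorem palmDist_leg_hub : palmDist (leg_s10 i j : PalmVert n a) hub_s10 = j + 1 := rfl

@[simp]
theorem palmDist_leg_leg : palmDist (leg_s10 i j : PalmVert n a) (leg_s10 i' j') =
    if i = i' then ((j : ℕ) - j') + ((j' : ℕ) - j) else (j : ℕ) + j' + 2 := rfl

end palmDist

theorem palm_adj_iff {n : ℕ} {a : ℕ → ℕ} (u v : PalmVert n a) :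
    (Palm n a).Adj u v ↔ palmDist u v = 1 := by
  rcases u.eq_hub_or_leg with rfl | ⟨i, j, rfl⟩ <;>
    rcases v.eq_hub_or_leg with rfl | ⟨i', j', rfl⟩
  · simp
  · change (hub_s10 ≠ leg_s10 i' j' ∧ ((j' : ℕ) = 0 ∨ False)) ↔ _
    simp
  · change (leg_s10 i j ≠ hub_s10 ∧ (False ∨ (j : ℕ) = 0)) ↔ _
    simp
  · change (leg_s10 i j ≠ leg_s10 i' j' ∧ (((i : ℕ) = i' ∧ (j' : ℕ) = j + 1) ∨
      ((i' : ℕ) = i ∧ (j : ℕ) = j' + 1))) ↔ _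
    simp only [ne_eq, leg_inj, palmDist_leg_leg, Fin.ext_iff]
    grind

theorem palm_dist {n : ℕ} {a : ℕ → ℕ} (u v : PalmVert n a) :
    (Palm n a).dist u v = palmDist u v := by
  refine dist_eq_of_descent (f := palmDist u) ?_ ?_ ?_ v
  · intro v
    rcases u.eq_hub_or_leg with rfl | ⟨i, j, rfl⟩ <;>
      rcases v.eq_hub_or_leg with rfl | ⟨i', j', rfl⟩ <;> simp
    grind
  · intro v w h
    rw [palm_adj_iff] at h
    rcases u.eq_hub_or_leg with rfl | ⟨i, j, rfl⟩ <;>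
      rcases v.eq_hub_or_leg with rfl | ⟨i', j', rfl⟩ <;>
        rcases w.eq_hub_or_leg with rfl | ⟨l, m, rfl⟩ <;> simp at h ⊢ <;> grind
  · intro v h
    simp only [palm_adj_iff]
    rcases v.eq_hub_or_leg with rfl | ⟨i, ⟨j, hj⟩, rfl⟩
    · rcases u.eq_hub_or_leg with rfl | ⟨i, ⟨j, hj⟩, rfl⟩
      · simp at h
      · exact ⟨leg_s10 i ⟨0, by omega⟩, by simp⟩
    · by_cases hu : ∃ l : Fin (a (i + 1)), u = leg_s10 i l ∧ j < l
      · obtain ⟨⟨l, hl⟩, rfl, hjl⟩ := hu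
        refine ⟨leg_s10 i ⟨j + 1, by simp at hjl; omega⟩, ?_⟩
        simp at hjl ⊢
        omega
      · rcases u.eq_hub_or_leg with rfl | ⟨i', l, rfl⟩
        · rcases j with _ | j
          · exact ⟨hub_s10, by simp⟩
          · exact ⟨leg_s10 i ⟨j, by omega⟩, by simp⟩
        · have hl : i' = i → (l : ℕ) ≤ j := by
            rintro rfl
            by_contra! hlt
            exact hu ⟨l, rfl, hlt⟩
          rcases j with _ | j
          · refine ⟨hub_s10, ?_⟩
            simp at h ⊢
            grind
          · refine ⟨leg_s10 i ⟨j, by omega⟩, ?_⟩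
            simp at h ⊢
            grind

/-- Coloring of a palm in which the first vertex of each leg has a private
color and the other vertices alternate between two colors. -/
theorem exists_isLocatingColoring_palm {p m : ℕ} {a : ℕ → ℕ} (ha : ∀ i, 1 ≤ a i) (hp : 2 ≤ p)
    (hm : p + 2 ≤ m) : ∃ c : PalmVert p a → Fin m, IsLocatingColoring (Palm p a) c := by
  let c : PalmVert p a → Fin m := fun v => match v with
    | none => ⟨0, by omega⟩
    | some ⟨i, j⟩ => if (j : ℕ) = 0 then ⟨i + 2, by omega⟩
        else if (j : ℕ) % 2 = 1 then ⟨0, by omega⟩ else ⟨1, by omega⟩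
  have hc0 : c hub_s10 = ⟨0, by omega⟩ := rfl
  have hc (i : Fin p) (j) : c (leg_s10 i j) = if (j : ℕ) = 0 then ⟨i + 2, by omega⟩
        else if (j : ℕ) % 2 = 1 then ⟨0, by omega⟩ else ⟨1, by omega⟩ := rfl
  have hd (u : PalmVert p a) (i : Fin p) :
      distToSet (Palm p a) u (c ⁻¹' {⟨i + 2, by omega⟩}) = palmDist u (leg_s10 i ⟨0, ha _⟩) := by
    have : c ⁻¹' {⟨i + 2, by omega⟩} = {leg_s10 i ⟨0, ha _⟩} := by
      ext v
      rcases v.eq_hub_or_leg with rfl | ⟨i', j, rfl⟩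
      · simp [hc0]
      · simp only [Set.mem_preimage, Set.mem_singleton_iff, hc, leg_inj, Fin.ext_iff]
        grind
    rw [this, distToSet, Set.image_singleton, csInf_singleton, palm_dist]
  refine ⟨c, ?_, ?_⟩
  · intro u v h
    rw [palm_adj_iff] at h
    rcases u.eq_hub_or_leg with rfl | ⟨i, j, rfl⟩ <;>
      rcases v.eq_hub_or_leg with rfl | ⟨i', j', rfl⟩ <;> simp [hc0, hc] at h ⊢ <;> grind
  · intro u v huv
    by_contra! H
    have H (i : Fin p) : palmDist u (leg_s10 i ⟨0, ha _⟩) = palmDist v (leg_s10 i ⟨0, ha _⟩) := by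
      rw [← hd, ← hd, H]
    have : Nontrivial (Fin p) := Fin.nontrivial_iff_two_le.2 hp
    rcases u.eq_hub_or_leg with rfl | ⟨i, j, rfl⟩ <;>
      rcases v.eq_hub_or_leg with rfl | ⟨i', j', rfl⟩
    · exact huv rfl
    · obtain ⟨l, hl⟩ := exists_ne i'
      have h := H l
      simp [hl.symm] at h
    · obtain ⟨l, hl⟩ := exists_ne i
      have h := H l
      simp [hl.symm] at h
    · have h₁ := H i
      have h₂ := H i'
      by_cases h : i = i'
      · subst h
        simp at h₁
        exact huv (by simp [h₁])
      · simp [h, Ne.symm h] at h₁ h₂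
        omega

theorem sInf_eq_of_forall_exists_le {S T : Set ℕ} (hST : ∀ s ∈ S, ∃ t ∈ T, t ≤ s)
    (hTS : ∀ t ∈ T, ∃ s ∈ S, s ≤ t) : sInf S = sInf T := by
  have key : ∀ {S T : Set ℕ}, (∀ s ∈ S, ∃ t ∈ T, t ≤ s) → S.Nonempty → sInf T ≤ sInf S := by
    intro S T h hS
    obtain ⟨t, ht, hle⟩ := h _ (Nat.sInf_mem hS)
    exact (Nat.sInf_le ht).trans hle
  rcases S.eq_empty_or_nonempty with rfl | hS
  · rcases T.eq_empty_or_nonempty with rfl | ⟨t, ht⟩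
    · rfl
    · simpa using hTS t ht
  · obtain ⟨s, hs⟩ := hS
    obtain ⟨t, ht, -⟩ := hST s hs
    exact le_antisymm (key hTS ⟨t, ht⟩) (key hST ⟨s, hs⟩)

/-- A locating coloring pulls back along an injective isometric map which, from each vertex of the
source, sees each color class as near as in the target. -/
theorem IsLocatingColoring.comp {V W : Type*} {G : SimpleGraph V} {H : SimpleGraph W} {m : ℕ}
    {c : W → Fin m} (hc : IsLocatingColoring H c) {φ : V → W} (h_inj : Function.Injective φ)
    (h_dist : ∀ u v, H.dist (φ u) (φ v) = G.dist u v)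
    (h_near : ∀ u w, ∃ v, c (φ v) = c w ∧ H.dist (φ u) (φ v) ≤ H.dist (φ u) w) :
    IsLocatingColoring G (c ∘ φ) := by
  have hd (u : V) (i : Fin m) :
      distToSet G u ((c ∘ φ) ⁻¹' {i}) = distToSet H (φ u) (c ⁻¹' {i}) := by
    apply sInf_eq_of_forall_exists_le
    · rintro _ ⟨v, hv, rfl⟩
      exact ⟨_, ⟨φ v, hv, rfl⟩, (h_dist u v).le⟩
    · rintro _ ⟨w, rfl, rfl⟩
      obtain ⟨v, hv, hle⟩ := h_near u w
      exact ⟨_, ⟨v, hv, rfl⟩, (h_dist u v).symm.le.trans hle⟩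
  refine ⟨fun u v h => hc.1 _ _ ?_, fun u v h => ?_⟩
  · rwa [← dist_eq_one_iff_adj, h_dist, dist_eq_one_iff_adj]
  · obtain ⟨i, hi⟩ := hc.2 _ _ (h_inj.ne h)
    exact ⟨i, by rwa [hd, hd]⟩

/-- The inclusion of a regular palm into the one with an additional leg at position `l`. -/
def palmSuccAbove {p k : ℕ} (l : Fin (p + 1)) :
    PalmVert p (fun _ => k) → PalmVert (p + 1) (fun _ => k)
  | none => none
  | some ⟨i, j⟩ => some ⟨l.succAbove i, j⟩

@[simp]
theorem palmSuccAbove_hub {p k : ℕ} (l : Fin (p + 1)) :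
    palmSuccAbove (k := k) l hub_s10 = hub_s10 := rfl

@[simp]
theorem palmSuccAbove_leg {p k : ℕ} (l : Fin (p + 1)) (i : Fin p) (j : Fin k) :
    palmSuccAbove (k := k) l (leg_s10 i j) = leg_s10 (l.succAbove i) j := rfl

/-- The leg containing a vertex of a palm, or `none` for the hub. -/
def palmLeg {n : ℕ} {a : ℕ → ℕ} : PalmVert n a → Option (Fin n)
  | none => none
  | some ⟨i, _⟩ => some i

@[simp]
theorem palmLeg_hub {n : ℕ} {a : ℕ → ℕ} : palmLeg (hub_s10 : PalmVert n a) = none := rfl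

@[simp]
theorem palmLeg_leg {n : ℕ} {a : ℕ → ℕ} (i : Fin n) (j : Fin (a ((i : ℕ) + 1))) :
    palmLeg (leg_s10 i j : PalmVert n a) = some i := rfl

theorem palmSuccAbove_injective {p k : ℕ} (l : Fin (p + 1)) :
    Function.Injective (palmSuccAbove (k := k) l) := by
  intro u v h
  rcases u.eq_hub_or_leg with rfl | ⟨i, j, rfl⟩ <;>
    rcases v.eq_hub_or_leg with rfl | ⟨i', j', rfl⟩ <;> simp_all

theorem exists_palmSuccAbove_eq {p k : ℕ} {l : Fin (p + 1)} {v : PalmVert (p + 1) (fun _ => k)}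
    (h : palmLeg v ≠ some l) : ∃ w, palmSuccAbove l w = v := by
  rcases v.eq_hub_or_leg with rfl | ⟨i, j, rfl⟩
  · exact ⟨hub_s10, rfl⟩
  · obtain ⟨i', rfl⟩ := Fin.exists_succAbove_eq (x := i) (y := l) (by simpa using h)
    exact ⟨leg_s10 i' j, rfl⟩

theorem palmDist_palmSuccAbove {p k : ℕ} (l : Fin (p + 1)) (u v : PalmVert p (fun _ => k)) :
    palmDist (palmSuccAbove l u) (palmSuccAbove l v) = palmDist u v := by
  rcases u.eq_hub_or_leg with rfl | ⟨i, j, rfl⟩ <;>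
    rcases v.eq_hub_or_leg with rfl | ⟨i', j', rfl⟩ <;> simp

theorem palmDist_le_add_hub {n : ℕ} {a : ℕ → ℕ} (u v : PalmVert n a) :
    palmDist u v ≤ palmDist u hub_s10 + palmDist hub_s10 v := by
  rcases u.eq_hub_or_leg with rfl | ⟨i, j, rfl⟩ <;>
    rcases v.eq_hub_or_leg with rfl | ⟨i', j', rfl⟩ <;> simp
  grind

theorem palmDist_eq_add_hub {p k : ℕ} {l : Fin (p + 1)} (u : PalmVert p (fun _ => k))
    {v : PalmVert (p + 1) (fun _ => k)} (hv : palmLeg v = some l) :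
    palmDist (palmSuccAbove l u) v = palmDist (palmSuccAbove l u) hub_s10 + palmDist hub_s10 v := by
  rcases v.eq_hub_or_leg with rfl | ⟨i', j', rfl⟩
  · simp at hv
  · obtain rfl : i' = l := by simpa using hv
    rcases u.eq_hub_or_leg with rfl | ⟨i, j, rfl⟩ <;> simp
    omega

/-- If there are at least as many legs as colors, some leg can be removed from a regular palm
without destroying a locating coloring. -/
theorem IsLocatingColoring.exists_palm_pred {p k m : ℕ}
    {c : PalmVert (p + 1) (fun _ => k) → Fin m}
    (hc : IsLocatingColoring (Palm (p + 1) (fun _ => k)) c) (hm : m ≤ p + 1) :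
    ∃ c' : PalmVert p (fun _ => k) → Fin m, IsLocatingColoring (Palm p (fun _ => k)) c' := by
  have hr : ∀ i : Fin m, ∃ r, ∀ v, c v = i → c r = i ∧ palmDist hub_s10 r ≤ palmDist hub_s10 v := by
    intro i
    rcases (c ⁻¹' {i}).eq_empty_or_nonempty with h | h
    · refine ⟨hub_s10, fun v hv => ?_⟩
      have : v ∈ c ⁻¹' {i} := hv
      simp [h] at this
    · obtain ⟨r, hr, hmin⟩ := exists_minimalFor_of_wellFoundedLT (· ∈ c ⁻¹' {i})
        (palmDist hub_s10) h
      refine ⟨r, fun v hv => ⟨hr, ?_⟩⟩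
      have := @hmin v hv
      omega
  choose r hr using hr
  have h_hub : palmLeg (r (c hub_s10)) = none := by
    have h := (hr _ hub_s10 rfl).2
    generalize r (c hub_s10) = x at h
    rcases x.eq_hub_or_leg with rfl | ⟨i, j, rfl⟩
    · rfl
    · simp at h
  obtain ⟨l, hl⟩ : ∃ l : Fin (p + 1), ∀ i, palmLeg (r i) ≠ some l := by
    by_contra! H
    have surj : Function.Surjective fun i => palmLeg (r i) := by
      rintro (_ | l)
      · exact ⟨_, h_hub⟩
      · exact H l
    have := Fintype.card_le_of_surjective _ surj
    simp at this
    omega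
  refine ⟨_, hc.comp (palmSuccAbove_injective l) (fun u v => ?_) (fun u w => ?_)⟩
  · rw [palm_dist, palm_dist, palmDist_palmSuccAbove]
  · simp only [palm_dist]
    by_cases hw : palmLeg w = some l
    · obtain ⟨v, hv⟩ := exists_palmSuccAbove_eq (hl (c w))
      obtain ⟨hcr, hle⟩ := hr _ w rfl
      refine ⟨v, by rw [hv, hcr], ?_⟩
      rw [hv, palmDist_eq_add_hub u hw]
      exact (palmDist_le_add_hub _ _).trans (by omega)
    · obtain ⟨v, rfl⟩ := exists_palmSuccAbove_eq hw
      exact ⟨v, rfl, le_rfl⟩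

/-- For a fixed positive integer `k`, the function `n ↦ χ_L(S_n(k))` is
weakly increasing: for every `n ≥ 3`, `χ_L(S_{n-1}(k)) ≤ χ_L(S_n(k))`. -/
theorem locatingChromaticNumber_regularPalm_mono (k : ℕ) (hk : 1 ≤ k)
    (n : ℕ) (hn : 3 ≤ n) :
    locatingChromaticNumber (Palm (n - 1) (fun _ => k)) ≤
      locatingChromaticNumber (Palm n (fun _ => k)) := by
  obtain ⟨p, rfl⟩ : ∃ p, n = p + 1 := ⟨n - 1, by omega⟩
  rw [Nat.add_sub_cancel]
  obtain ⟨c, hc⟩ := Nat.sInf_mem (s := {m : ℕ | ∃ c : PalmVert (p + 1) (fun _ => k) → Fin m,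
      IsLocatingColoring (Palm (p + 1) (fun _ => k)) c})
    ⟨p + 1 + 2, exists_isLocatingColoring_palm (fun _ => hk) (by omega) le_rfl⟩
  apply Nat.sInf_le
  by_cases hm : locatingChromaticNumber (Palm (p + 1) (fun _ => k)) ≤ p + 1
  · exact hc.exists_palm_pred hm
  · exact exists_isLocatingColoring_palm (fun _ => hk) (by omega) (by omega)
end

section
/- Define f(p) = (p−1)⌊p²/4⌋ − ⌊(p²−2p)/4⌋ for integers p ≥ 3 (with f(2) computed by the same formula). Then for every n ≥ 2 and every integer p ≥ 3: χ_L(S_n(3)) = p if and only if f(p−1) < n ≤ f(p). -/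
open SimpleGraph

/-- `f(p) = (p-1)·⌊p²/4⌋ - ⌊(p²-2p)/4⌋` (for `p ≥ 2` the natural-number divisions and
subtraction agree with the intended integer floors). -/
def palmThreeBound (p : ℕ) : ℤ :=
  ((p : ℤ) - 1) * ((p ^ 2 / 4 : ℕ) : ℤ) - (((p ^ 2 - 2 * p) / 4 : ℕ) : ℤ)

namespace SimpleGraph

/-- A function `d` that is `1`-Lipschitz along edges, and that can be decreased by one along
some edge whenever the endpoints differ, is the graph distance. -/
theorem dist_eq_of_lipschitz_of_step {V : Type*} {G : SimpleGraph V} {d : V → V → ℕ}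
    (self : ∀ u, d u u = 0) (lipschitz : ∀ u v w, G.Adj v w → d u w ≤ d u v + 1)
    (step : ∀ u v, u ≠ v → ∃ w, G.Adj w v ∧ d u w + 1 = d u v) (u v : V) :
    G.dist u v = d u v := by
  have upper : ∀ r v, d u v = r → ∃ p : G.Walk u v, p.length = r := by
    intro r
    induction r with
    | zero =>
      intro v hv
      by_cases huv : u = v
      · subst huv
        exact ⟨.nil, rfl⟩
      · obtain ⟨w, -, hw⟩ := step u v huv
        omega
    | succ r ih =>
      intro v hv
      have huv : u ≠ v := by
        rintro rfl
        rw [self] at hv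
        omega
      obtain ⟨w, hwv, hw⟩ := step u v huv
      obtain ⟨p, hp⟩ := ih w (by omega)
      exact ⟨p.concat hwv, by simp [hp]⟩
  have lower : ∀ {v w : V} (p : G.Walk v w), d u w ≤ d u v + p.length := by
    intro v w p
    induction p with
    | nil => simp
    | cons h p ih =>
      have := lipschitz u _ _ h
      rw [Walk.length_cons]
      omega
  obtain ⟨p, hp⟩ := upper _ v rfl
  obtain ⟨q, hq⟩ := p.reachable.exists_walk_length_eq_dist
  have := lower q
  have := dist_le p
  rw [self] at *
  omega

end SimpleGraph

section DistToSet

variable {V : Type*} {G : SimpleGraph V}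

theorem distToSet_le_of_forall_exists {u v : V} {S : Set V}
    (h : ∀ w ∈ S, ∃ w' ∈ S, G.dist u w' ≤ G.dist v w) : distToSet G u S ≤ distToSet G v S := by
  rcases S.eq_empty_or_nonempty with rfl | hS
  · simp [distToSet]
  · obtain ⟨w, hw, hwv⟩ := Nat.sInf_mem (hS.image (G.dist v))
    obtain ⟨w', hw', hle⟩ := h w hw
    calc distToSet G u S ≤ G.dist u w' := Nat.sInf_le ⟨w', hw', rfl⟩
      _ ≤ G.dist v w := hle
      _ = distToSet G v S := hwv

theorem distToSet_le_iff {u : V} {S : Set V} (hS : S.Nonempty) {r : ℕ} :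
    distToSet G u S ≤ r ↔ ∃ w ∈ S, G.dist u w ≤ r := by
  constructor
  · intro h
    obtain ⟨w, hw, hwu⟩ := Nat.sInf_mem (hS.image (G.dist u))
    exact ⟨w, hw, hwu.trans_le h⟩
  · rintro ⟨w, hw, hle⟩
    exact (Nat.sInf_le (Set.mem_image_of_mem _ hw)).trans hle

theorem exists_dist_le_iff_of_distToSet_eq {u v : V} {S : Set V}
    (h : distToSet G u S = distToSet G v S) (r : ℕ) :
    (∃ w ∈ S, G.dist u w ≤ r) ↔ ∃ w ∈ S, G.dist v w ≤ r := by
  rcases S.eq_empty_or_nonempty with rfl | hS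
  · simp
  · rw [← distToSet_le_iff hS, ← distToSet_le_iff hS, h]

end DistToSet

namespace Palm

variable {n : ℕ} {a : ℕ → ℕ}

/-- The hub of a palm. -/
def hub : PalmVert n a := none

/-- The `j`-th vertex of the `i`-th leg of a palm. -/
def legVert (i : Fin n) (j : Fin (a (i + 1))) : PalmVert n a := some ⟨i, j⟩

@[elab_as_elim]
theorem vertCases {motive : PalmVert n a → Prop} (hub : motive hub)
    (legVert : ∀ i j, motive (legVert i j)) : ∀ u, motive u
  | none => hub
  | some ⟨i, j⟩ => legVert i j

theorem adj_hub_legVert {i : Fin n} {j : Fin (a (i + 1))} :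
    (Palm n a).Adj hub (legVert i j) ↔ (j : ℕ) = 0 := by
  refine (fromRel_adj _ _ _).trans ⟨?_, fun h => ⟨nofun, .inl h⟩⟩
  rintro ⟨-, h | h⟩
  · exact h
  · exact h.elim

theorem adj_legVert_legVert {i i' : Fin n} {j : Fin (a (i + 1))} {j' : Fin (a (i' + 1))} :
    (Palm n a).Adj (legVert i j) (legVert i' j') ↔
      i = i' ∧ ((j' : ℕ) = j + 1 ∨ (j : ℕ) = j' + 1) := by
  refine (fromRel_adj _ _ _).trans ⟨?_, ?_⟩
  · rintro ⟨-, ⟨h, h'⟩ | ⟨h, h'⟩⟩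
    · exact ⟨Fin.ext h, .inl h'⟩
    · exact ⟨Fin.ext h.symm, .inr h'⟩
  · rintro ⟨rfl, h⟩
    refine ⟨fun heq => ?_, h.imp (⟨rfl, ·⟩) (⟨rfl, ·⟩)⟩
    cases heq
    omega

/-- The distance in a palm, in closed form. -/
def explicitDist : PalmVert n a → PalmVert n a → ℕ
  | none, none => 0
  | none, some ⟨_, j⟩ => j + 1
  | some ⟨_, j⟩, none => j + 1
  | some ⟨i, j⟩, some ⟨i', j'⟩ =>
    if i = i' then ((j : ℕ) - j') + ((j' : ℕ) - j) else j + j' + 2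

theorem explicitDist_hub_hub : explicitDist (hub : PalmVert n a) hub = 0 := rfl

theorem explicitDist_hub_legVert (i : Fin n) (j : Fin (a (i + 1))) :
    explicitDist hub (legVert i j) = j + 1 := rfl

theorem explicitDist_legVert_hub (i : Fin n) (j : Fin (a (i + 1))) :
    explicitDist (legVert i j) hub = j + 1 := rfl

theorem explicitDist_legVert_legVert (i i' : Fin n) (j : Fin (a (i + 1)))
    (j' : Fin (a (i' + 1))) :
    explicitDist (legVert i j) (legVert i' j') =
      if i = i' then ((j : ℕ) - j') + ((j' : ℕ) - j) else j + j' + 2 := rfl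

theorem dist_eq_explicitDist (u v : PalmVert n a) : (Palm n a).dist u v = explicitDist u v := by
  refine dist_eq_of_lipschitz_of_step ?_ ?_ ?_ u v
  · intro u
    cases u using vertCases with
    | hub => rfl
    | legVert i j => simp [explicitDist_legVert_legVert]
  · intro u v w
    cases v using vertCases with
    | hub =>
      cases w using vertCases with
      | hub => simp
      | legVert i j =>
        rw [adj_hub_legVert]
        intro h
        cases u using vertCases with
        | hub => simp [explicitDist_hub_legVert, h]
        | legVert i' j' =>
          rw [explicitDist_legVert_hub, explicitDist_legVert_legVert]
          split_ifs <;> omega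
    | legVert i j =>
      cases w using vertCases with
      | hub =>
        rw [adj_comm, adj_hub_legVert]
        intro h
        cases u using vertCases with
        | hub => simp [explicitDist_hub_hub]
        | legVert i' j' =>
          rw [explicitDist_legVert_hub, explicitDist_legVert_legVert]
          split_ifs <;> omega
      | legVert i' j' =>
        rw [adj_legVert_legVert]
        rintro ⟨rfl, h⟩
        cases u using vertCases with
        | hub =>
          simp only [explicitDist_hub_legVert]
          omega
        | legVert i' j' =>
          simp only [explicitDist_legVert_legVert]
          split_ifs <;> omega
  · intro u v huv
    cases v using vertCases with
    | hub =>
      cases u using vertCases with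
      | hub => exact absurd rfl huv
      | legVert i j =>
        refine ⟨legVert i ⟨0, j.pos⟩, ?_, ?_⟩
        · rw [adj_comm, adj_hub_legVert]
        · simp [explicitDist_legVert_legVert, explicitDist_legVert_hub]
    | legVert i j =>
      have inward : (∃ w, (Palm n a).Adj w (legVert i j) ∧ (w = hub ∧ (j : ℕ) = 0 ∨
          ∃ j' : Fin (a (i + 1)), w = legVert i j' ∧ (j : ℕ) = j' + 1)) := by
        rcases Nat.eq_zero_or_pos (j : ℕ) with hj | hj
        · exact ⟨hub, adj_hub_legVert.2 hj, .inl ⟨rfl, hj⟩⟩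
        · have hj' : (j : ℕ) = (j - 1 : ℕ) + 1 := by omega
          exact ⟨legVert i ⟨j - 1, by omega⟩, adj_legVert_legVert.2 ⟨rfl, .inl hj'⟩,
            .inr ⟨_, rfl, hj'⟩⟩
      cases u using vertCases with
      | hub =>
        obtain ⟨w, hw, ⟨rfl, hj⟩ | ⟨j', rfl, hj⟩⟩ := inward
        · exact ⟨_, hw, by simp [explicitDist_hub_hub, explicitDist_hub_legVert, hj]⟩
        · exact ⟨_, hw, by simp [explicitDist_hub_legVert, hj]⟩
      | legVert i' j' =>
        by_cases hi : i' = i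
        · subst hi
          rcases lt_trichotomy (j' : ℕ) j with hj | hj | hj
          · refine ⟨legVert i' ⟨j - 1, by omega⟩, adj_legVert_legVert.2 ⟨rfl, ?_⟩, ?_⟩
            · simp only
              omega
            · rw [explicitDist_legVert_legVert, explicitDist_legVert_legVert, if_pos rfl, if_pos rfl]
              simp only
              omega
          · exact absurd (congrArg _ (Fin.ext hj)) huv
          · refine ⟨legVert i' ⟨j + 1, by omega⟩, adj_legVert_legVert.2 ⟨rfl, .inr rfl⟩, ?_⟩
            simp only [explicitDist_legVert_legVert, if_true]
            omega
        · obtain ⟨w, hw, ⟨rfl, hj⟩ | ⟨j', rfl, hj⟩⟩ := inward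
          · refine ⟨_, hw, ?_⟩
            rw [explicitDist_legVert_hub, explicitDist_legVert_legVert, if_neg hi]
            omega
          · refine ⟨_, hw, ?_⟩
            rw [explicitDist_legVert_legVert, explicitDist_legVert_legVert, if_neg hi, if_neg hi]
            omega

theorem dist_hub_legVert (i : Fin n) (j : Fin (a (i + 1))) :
    (Palm n a).dist hub (legVert i j) = j + 1 := dist_eq_explicitDist _ _

theorem dist_legVert_hub (i : Fin n) (j : Fin (a (i + 1))) :
    (Palm n a).dist (legVert i j) hub = j + 1 := dist_eq_explicitDist _ _

theorem dist_legVert_legVert (i i' : Fin n) (j : Fin (a (i + 1))) (j' : Fin (a (i' + 1))) :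
    (Palm n a).dist (legVert i j) (legVert i' j') =
      if i = i' then ((j : ℕ) - j') + ((j' : ℕ) - j) else j + j' + 2 :=
  dist_eq_explicitDist _ _

end Palm

section LegTypes

open Finset

variable {α : Type*} [Fintype α] [DecidableEq α]

/-- The possible types `(x, y, z)` of a leg of length three: `x ∈ A` is the color of its first
vertex, `y` that of its second one, and `z` that of its third one if this is in `M`,
and `none` otherwise. -/
def legTypes (A M : Finset α) : Finset (Σ _ : α, Σ _ : α, Option α) :=
  A.sigma fun x => (univ.erase x).sigma fun y => (insertNone M).erase (some y)

theorem mem_legTypes {A M : Finset α} {x y : α} {z : Option α} :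
    ⟨x, y, z⟩ ∈ legTypes A M ↔ x ∈ A ∧ y ≠ x ∧ z ≠ some y ∧ ∀ w ∈ z, w ∈ M := by
  simp [legTypes, mem_insertNone]

theorem card_legTypes_add {A M : Finset α} (h : Disjoint A M) :
    #(legTypes A M) + #A * #M = #A * ((Fintype.card α - 1) * (#M + 1)) := by
  have inner (x : α) (hx : x ∈ A) :
      ∑ y ∈ univ.erase x, #((insertNone M).erase (some y)) + #M =
        (Fintype.card α - 1) * (#M + 1) := by
    have hM : #M = ∑ y ∈ univ.erase x, if y ∈ M then 1 else 0 := by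
      rw [sum_boole, Nat.cast_id]
      congr 1
      ext y
      simp only [mem_filter, mem_erase, mem_univ, and_true]
      exact ⟨fun hy => ⟨fun e => disjoint_left.1 h hx (e ▸ hy), hy⟩, And.right⟩
    nth_rw 1 [hM]
    rw [← sum_add_distrib]
    calc _ = ∑ y ∈ univ.erase x, (#M + 1) := by
          refine sum_congr rfl fun y _ => ?_
          split_ifs with hy
          · rw [card_erase_of_mem (by simpa using hy), card_insertNone, Nat.add_sub_cancel]
          · rw [erase_eq_of_notMem (by simpa using hy), card_insertNone, Nat.add_zero]
      _ = _ := by simp [card_erase_of_mem]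
  rw [legTypes, card_sigma]
  simp only [card_sigma]
  rw [← smul_eq_mul #A #M, ← sum_const, ← sum_add_distrib, sum_congr rfl inner, sum_const,
    smul_eq_mul]

theorem card_legTypes_compl {A : Finset α} {h : α} (hA : h ∉ A) :
    ∃ m, #A + m + 1 = Fintype.card α ∧
      #(legTypes A (insert h A)ᶜ) + #A * m = #A * ((#A + m) * (m + 1)) := by
  have hle := card_le_univ (insert h A)
  have hc := card_compl (insert h A)
  rw [card_insert_of_notMem hA] at hle hc
  have key := card_legTypes_add (A := A) (M := (insert h A)ᶜ)
    (disjoint_compl_right.mono_left (subset_insert h A))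
  refine ⟨#(insert h A)ᶜ, by omega, ?_⟩
  rwa [show Fintype.card α - 1 = #A + #(insert h A)ᶜ by omega] at key

end LegTypes

section PalmThreeBound

theorem palmThreeBound_two_mul {q : ℕ} (hq : 1 ≤ q) :
    palmThreeBound (2 * q) = (2 * q - 1) * q ^ 2 - (q ^ 2 - q) := by
  have h₁ : (2 * q) ^ 2 / 4 = q ^ 2 := by
    rw [mul_pow]
    omega
  have h₂ : ((2 * q) ^ 2 - 2 * (2 * q)) / 4 = q ^ 2 - q := by
    rw [mul_pow]
    omega
  have h₃ : q ≤ q ^ 2 := by nlinarith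
  rw [palmThreeBound, h₁, h₂]
  push_cast [h₃]
  ring

theorem palmThreeBound_two_mul_add_one {q : ℕ} (hq : 1 ≤ q) :
    palmThreeBound (2 * q + 1) = 2 * q * (q ^ 2 + q) - (q ^ 2 - 1) := by
  have h₀ : (2 * q + 1) ^ 2 = 4 * (q ^ 2 + q) + 1 := by ring
  have h₁ : (2 * q + 1) ^ 2 / 4 = q ^ 2 + q := by omega
  have h₃ : 1 ≤ q ^ 2 := Nat.one_le_pow _ _ hq
  have h₂ : ((2 * q + 1) ^ 2 - 2 * (2 * q + 1)) / 4 = q ^ 2 - 1 := by omega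
  rw [palmThreeBound, h₁, h₂]
  push_cast [h₃]
  ring

theorem palmThreeBound_lt_succ {p : ℕ} (hp : 2 ≤ p) :
    palmThreeBound p < palmThreeBound (p + 1) := by
  obtain ⟨q, rfl | rfl⟩ := Nat.even_or_odd' p
  · rw [palmThreeBound_two_mul (by omega), palmThreeBound_two_mul_add_one (by omega)]
    have : (1 : ℤ) ≤ q := by omega
    nlinarith [mul_nonneg (sub_nonneg.2 this) (sub_nonneg.2 this)]
  · rw [palmThreeBound_two_mul_add_one (by omega),
      show 2 * q + 1 + 1 = 2 * (q + 1) by ring, palmThreeBound_two_mul (by omega)]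
    have : (1 : ℤ) ≤ q := by omega
    push_cast
    nlinarith [mul_nonneg (sub_nonneg.2 this) (sub_nonneg.2 this)]

theorem palmThreeBound_mono {p q : ℕ} (hp : 2 ≤ p) (hpq : p ≤ q) :
    palmThreeBound p ≤ palmThreeBound q := by
  induction q, hpq using Nat.le_induction with
  | base => rfl
  | succ q hpq ih => exact ih.trans (palmThreeBound_lt_succ (hp.trans hpq)).le

theorem sub_one_le_palmThreeBound {p : ℕ} (hp : 2 ≤ p) :
    (p : ℤ) - 1 ≤ palmThreeBound p := by
  induction p, hp using Nat.le_induction with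
  | base => decide
  | succ p hp ih =>
    have := palmThreeBound_lt_succ hp
    push_cast
    omega

theorem le_palmThreeBound {p a m N : ℕ} (ha : 1 ≤ a) (hp : 2 ≤ p) (ham : a + m + 1 = p)
    (hN : N + a * m = a * ((a + m) * (m + 1))) : (N : ℤ) ≤ palmThreeBound p := by
  have hN' : (N : ℤ) = a * ((a + m) * (m + 1)) - a * m := by
    rw [eq_sub_iff_add_eq]
    exact_mod_cast hN
  obtain ⟨q, rfl | rfl⟩ := Nat.even_or_odd' p
  · have hm : (m : ℤ) = 2 * q - 1 - a := by omega
    rw [palmThreeBound_two_mul (by omega), hN', hm]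
    rcases (show q = 1 ∨ 2 ≤ q by omega) with rfl | hq
    · obtain rfl : a = 1 := by omega
      norm_num
    · have key : 0 ≤ ((a : ℤ) - q) * ((2 * q - 2) * (a - q) - 1) := by
        rcases le_or_gt a q with h | h
        · have : (a : ℤ) - q ≤ 0 := by omega
          exact mul_nonneg_of_nonpos_of_nonpos this (by nlinarith)
        · have : 1 ≤ (a : ℤ) - q := by omega
          exact mul_nonneg (by omega) (by nlinarith)
      linarith
  · have hm : (m : ℤ) = 2 * q - a := by omega
    rw [palmThreeBound_two_mul_add_one (by omega), hN', hm]
    have key : 0 ≤ ((a : ℤ) - q - 1) * ((2 * q - 1) * (a - q) - 1) := by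
      rcases le_or_gt a q with h | h
      · have : (a : ℤ) - q ≤ 0 := by omega
        exact mul_nonneg_of_nonpos_of_nonpos (by omega) (by nlinarith)
      · have : 1 ≤ (a : ℤ) - q := by omega
        exact mul_nonneg (by omega) (by nlinarith)
    linarith

theorem eq_palmThreeBound {p a m N : ℕ} (hp : 2 ≤ p) (ha : a = (p + 1) / 2)
    (ham : a + m + 1 = p) (hN : N + a * m = a * ((a + m) * (m + 1))) :
    (N : ℤ) = palmThreeBound p := by
  have hN' : (N : ℤ) = a * ((a + m) * (m + 1)) - a * m := by
    rw [eq_sub_iff_add_eq]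
    exact_mod_cast hN
  obtain ⟨q, rfl | rfl⟩ := Nat.even_or_odd' p
  · have hm : (m : ℤ) = q - 1 := by omega
    have ha : (a : ℤ) = q := by omega
    rw [palmThreeBound_two_mul (by omega), hN', hm, ha]
    ring
  · have hm : (m : ℤ) = q - 1 := by omega
    have ha : (a : ℤ) = q + 1 := by omega
    rw [palmThreeBound_two_mul_add_one (by omega), hN', hm, ha]
    ring

end PalmThreeBound

namespace Palm

variable {n : ℕ}

/-- The `j`-th vertex of the `i`-th leg of the palm whose legs all have length three. -/
def vert (i : Fin n) (j : Fin 3) : PalmVert n (fun _ => 3) := legVert i j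

@[elab_as_elim]
theorem vertThreeCases {motive : PalmVert n (fun _ => 3) → Prop} (hub : motive hub)
    (first : ∀ i, motive (vert i 0)) (second : ∀ i, motive (vert i 1))
    (third : ∀ i, motive (vert i 2)) : ∀ u, motive u
  | none => hub
  | some ⟨i, 0⟩ => first i
  | some ⟨i, 1⟩ => second i
  | some ⟨i, 2⟩ => third i

theorem exists_iff {P : PalmVert n (fun _ => 3) → Prop} :
    (∃ w, P w) ↔ P hub ∨ ∃ i j, P (vert i j) := by
  constructor
  · rintro ⟨w, hw⟩
    cases w using vertCases with
    | hub => exact .inl hw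
    | legVert i j => exact .inr ⟨i, j, hw⟩
  · rintro (h | ⟨i, j, h⟩)
    exacts [⟨_, h⟩, ⟨_, h⟩]

theorem dist_hub_vert (i : Fin n) (j : Fin 3) :
    (Palm n (fun _ => 3)).dist hub (vert i j) = j + 1 := dist_hub_legVert i _

theorem dist_vert_hub (i : Fin n) (j : Fin 3) :
    (Palm n (fun _ => 3)).dist (vert i j) hub = j + 1 := dist_legVert_hub i _

theorem dist_vert_vert (i i' : Fin n) (j j' : Fin 3) :
    (Palm n (fun _ => 3)).dist (vert i j) (vert i' j') =
      if i = i' then ((j : ℕ) - j') + ((j' : ℕ) - j) else j + j' + 2 :=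
  dist_legVert_legVert i i' _ _

theorem adj_hub_vert {i : Fin n} {j : Fin 3} :
    (Palm n (fun _ => 3)).Adj hub (vert i j) ↔ (j : ℕ) = 0 := adj_hub_legVert

theorem adj_vert_vert {i i' : Fin n} {j j' : Fin 3} :
    (Palm n (fun _ => 3)).Adj (vert i j) (vert i' j') ↔
      i = i' ∧ ((j' : ℕ) = j + 1 ∨ (j : ℕ) = j' + 1) := adj_legVert_legVert

section Near

variable {α : Type*} (c : PalmVert n (fun _ => 3) → α) (s : α)

theorem exists_dist_hub_le_iff (r : ℕ) :
    (∃ w ∈ c ⁻¹' {s}, (Palm n (fun _ => 3)).dist hub w ≤ r) ↔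
      c hub = s ∨ ∃ i j, c (vert i j) = s ∧ (j : ℕ) + 1 ≤ r := by
  simp [exists_iff, dist_hub_vert]

theorem exists_dist_vert_le_iff (i : Fin n) (j : Fin 3) (r : ℕ) :
    (∃ w ∈ c ⁻¹' {s}, (Palm n (fun _ => 3)).dist (vert i j) w ≤ r) ↔
      (c hub = s ∧ (j : ℕ) + 1 ≤ r) ∨
      (∃ j', c (vert i j') = s ∧ ((j : ℕ) - j') + ((j' : ℕ) - j) ≤ r) ∨
      ∃ i' ≠ i, ∃ j', c (vert i' j') = s ∧ (j : ℕ) + j' + 2 ≤ r := by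
  simp only [exists_iff, dist_vert_hub, dist_vert_vert, Set.mem_preimage, Set.mem_singleton_iff]
  refine or_congr_right ⟨?_, ?_⟩
  · rintro ⟨i', j', hs, hd⟩
    split_ifs at hd with h
    · exact .inl ⟨j', h ▸ hs, hd⟩
    · exact .inr ⟨i', Ne.symm h, j', hs, hd⟩
  · rintro (⟨j', hs, hd⟩ | ⟨i', h, j', hs, hd⟩)
    · exact ⟨i, j', hs, by rwa [if_pos rfl]⟩
    · exact ⟨i', j', hs, by rwa [if_neg h.symm]⟩

end Near

theorem isLocatingColoring_of_legs {k : ℕ} {c : PalmVert n (fun _ => 3) → Fin k}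
    {h : Fin k} {x y z : Fin n → Fin k} (c_hub : c hub = h) (c_first : ∀ i, c (vert i 0) = x i)
    (c_second : ∀ i, c (vert i 1) = y i) (c_third : ∀ i, c (vert i 2) = z i)
    (hx : ∀ i, x i ≠ h) (hz : ∀ i, z i ≠ h) (hyx : ∀ i, y i ≠ x i) (hyz : ∀ i, y i ≠ z i)
    (hzx : ∀ i i', z i = x i' → z i = x i) (two : ∀ i, ∃ i', x i' ≠ x i)
    (inj : ∀ i i', x i = x i' → y i = y i' → z i = z i' → i = i') :
    IsLocatingColoring (Palm n (fun _ => 3)) c := by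
  obtain ⟨near, near_iff⟩ : ∃ near : PalmVert n (fun _ => 3) → ℕ → Fin k → Prop, ∀ u r s,
      near u r s ↔ ∃ w ∈ c ⁻¹' {s}, (Palm n (fun _ => 3)).dist u w ≤ r :=
    ⟨_, fun _ _ _ => Iff.rfl⟩
  have hub₀ (s) : near hub 0 s ↔ s = h := by
    simp only [near_iff, exists_dist_hub_le_iff]
    grind
  have hub₁ (s) : near hub 1 s ↔ s = h ∨ ∃ i, s = x i := by
    simp only [near_iff, exists_dist_hub_le_iff, Fin.exists_fin_succ]
    simp [c_hub, c_first, eq_comm]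
  have vert₀ (i j s) : near (vert i j) 0 s ↔ s = c (vert i j) := by
    simp only [near_iff, exists_dist_vert_le_iff]
    grind
  have first₁ (i s) : near (vert i 0) 1 s ↔ s = h ∨ s = x i ∨ s = y i := by
    simp only [near_iff, exists_dist_vert_le_iff, Fin.exists_fin_succ]
    simp [c_hub, c_first, c_second, eq_comm]
  have first₂ (i s) : near (vert i 0) 2 s ↔ s = h ∨ s = y i ∨ s = z i ∨ ∃ i', s = x i' := by
    simp only [near_iff, exists_dist_vert_le_iff, Fin.exists_fin_succ]
    simp [c_hub, c_first, c_second, c_third]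
    grind
  have second₁ (i s) : near (vert i 1) 1 s ↔ s = x i ∨ s = y i ∨ s = z i := by
    simp only [near_iff, exists_dist_vert_le_iff, Fin.exists_fin_succ]
    simp [c_first, c_second, c_third, eq_comm]
  have second₂ (i s) : near (vert i 1) 2 s ↔ s = h ∨ s = x i ∨ s = y i ∨ s = z i := by
    simp only [near_iff, exists_dist_vert_le_iff, Fin.exists_fin_succ]
    simp [c_hub, c_first, c_second, c_third, eq_comm]
  have third₁ (i s) : near (vert i 2) 1 s ↔ s = y i ∨ s = z i := by
    simp only [near_iff, exists_dist_vert_le_iff, Fin.exists_fin_succ]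
    simp [c_second, c_third, eq_comm]
  have third₂ (i s) : near (vert i 2) 2 s ↔ s = x i ∨ s = y i ∨ s = z i := by
    simp only [near_iff, exists_dist_vert_le_iff, Fin.exists_fin_succ]
    simp [c_first, c_second, c_third, eq_comm]
  obtain ⟨code, code_iff⟩ : ∃ code : PalmVert n (fun _ => 3) → PalmVert n (fun _ => 3) → Prop,
      ∀ {u v}, code u v ↔ ∀ r s, near u r s ↔ near v r s := ⟨_, Iff.rfl⟩
  have code_symm {u v} (huv : code u v) : code v u := by
    rw [code_iff] at *
    exact fun r s => (huv r s).symm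
  have hub_first (i) : ¬ code hub (vert i 0) := fun hc => by grind [code_iff.1 hc 0 h]
  have hub_second (i) : ¬ code hub (vert i 1) := fun hc => by
    obtain ⟨i', hi'⟩ := two i
    grind [code_iff.1 hc 0 h, code_iff.1 hc 1 (x i')]
  have hub_third (i) : ¬ code hub (vert i 2) := fun hc => by grind [code_iff.1 hc 0 h]
  have first_second (i j) : ¬ code (vert i 0) (vert j 1) := fun hc => by
    grind [code_iff.1 hc 0 (x i), code_iff.1 hc 1 h]
  have first_third (i j) : ¬ code (vert i 0) (vert j 2) := fun hc => by
    obtain ⟨i', hi'⟩ := two i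
    grind [code_iff.1 hc 0 (x i), code_iff.1 hc 1 h, code_iff.1 hc 2 (x i')]
  have second_third (i j) : ¬ code (vert i 1) (vert j 2) := fun hc => by
    grind [code_iff.1 hc 0 (y i), code_iff.1 hc 1 h, code_iff.1 hc 2 h]
  have first_first (i j) (hc : code (vert i 0) (vert j 0)) : i = j := by
    grind [code_iff.1 hc 0 (x i), code_iff.1 hc 1 (y i), code_iff.1 hc 1 (y j),
      code_iff.1 hc 2 (z i), code_iff.1 hc 2 (z j)]
  have second_second (i j) (hc : code (vert i 1) (vert j 1)) : i = j := by
    grind [code_iff.1 hc 0 (y i), code_iff.1 hc 1 (x i), code_iff.1 hc 1 (x j),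
      code_iff.1 hc 1 (z i), code_iff.1 hc 1 (z j)]
  have third_third (i j) (hc : code (vert i 2) (vert j 2)) : i = j := by
    grind [code_iff.1 hc 0 (z i), code_iff.1 hc 1 (y i), code_iff.1 hc 1 (y j),
      code_iff.1 hc 2 (x i), code_iff.1 hc 2 (x j)]
  refine ⟨fun u v => ?_, fun u v => ?_⟩
  · cases u using vertThreeCases <;> cases v using vertThreeCases <;>
      simp only [adj_hub_vert, adj_vert_vert, SimpleGraph.irrefl, (Palm n _).adj_comm _ hub, c_hub,
        c_first, c_second, c_third] <;> grind
  · contrapose!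
    intro hdist
    have hc : code u v := by
      refine code_iff.2 fun r s => ?_
      rw [near_iff, near_iff, exists_dist_le_iff_of_distToSet_eq (hdist s) r]
    cases u using vertThreeCases <;> cases v using vertThreeCases <;> grind

theorem exists_isLocatingColoring {k : ℕ} (hk : 3 ≤ k) (hkn : (k + 1) / 2 ≤ n)
    (hn : (n : ℤ) ≤ palmThreeBound k) :
    ∃ c : PalmVert n (fun _ => 3) → Fin k, IsLocatingColoring (Palm n (fun _ => 3)) c := by
  classical
  let h : Fin k := ⟨0, by omega⟩
  obtain ⟨A, hAh, hA⟩ : ∃ A ⊆ Finset.univ.erase h, A.card = (k + 1) / 2 :=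
    Finset.exists_subset_card_eq <| by
      rw [Finset.card_erase_of_mem (Finset.mem_univ h), Finset.card_univ, Fintype.card_fin]
      omega
  have hhA : h ∉ A := fun hmem => by simpa using hAh hmem
  obtain ⟨m, hm, hcard⟩ := card_legTypes_compl hhA
  rw [Fintype.card_fin] at hm
  rw [← eq_palmThreeBound (by omega) hA hm hcard, Nat.cast_le] at hn
  have hinj : Function.Injective fun x : Fin k => (⟨x, h, none⟩ : Σ _ : Fin k, Σ _ : Fin k,
      Option (Fin k)) := fun x x' hxx => congrArg Sigma.fst hxx
  obtain ⟨S, hAS, hST, hS⟩ := Finset.exists_subsuperset_card_eq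
    (s := A.image fun x => ⟨x, h, none⟩) (t := legTypes A (insert h A)ᶜ) (n := n)
    (by
      intro l hl
      obtain ⟨x, hx, rfl⟩ := Finset.mem_image.1 hl
      refine mem_legTypes.2 ⟨hx, ?_, by simp, by simp⟩
      rintro rfl
      exact hhA hx)
    (by rwa [Finset.card_image_of_injective _ hinj, hA]) hn
  let t (i : Fin n) : Σ _ : Fin k, Σ _ : Fin k, Option (Fin k) := (S.equivFinOfCardEq hS).symm i
  let x (i : Fin n) : Fin k := (t i).1
  let y (i : Fin n) : Fin k := (t i).2.1
  let z (i : Fin n) : Fin k := (t i).2.2.getD (x i)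
  have t_mem (i) : x i ∈ A ∧ y i ≠ x i ∧ (t i).2.2 ≠ some (y i) ∧
      ∀ w ∈ (t i).2.2, w ∈ (insert h A)ᶜ :=
    mem_legTypes.1 (hST ((S.equivFinOfCardEq hS).symm i).2)
  have x_surj (s) (hs : s ∈ A) : ∃ i, x i = s := by
    refine ⟨S.equivFinOfCardEq hS ⟨_, hAS (Finset.mem_image_of_mem _ hs)⟩, ?_⟩
    simp [x, t]
  have z_cases (i) : (t i).2.2 = none ∧ z i = x i ∨
      (t i).2.2 = some (z i) ∧ z i ≠ h ∧ z i ∉ A := by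
    rcases hti : (t i).2.2 with _ | w
    · exact .inl ⟨rfl, by simp only [z, hti, Option.getD_none]⟩
    · have hw := (t_mem i).2.2.2 w hti
      have hz : z i = w := by simp only [z, hti, Option.getD_some]
      rw [Finset.mem_compl, Finset.mem_insert, not_or] at hw
      exact .inr ⟨by rw [hz], by rwa [hz]⟩
  refine ⟨fun v => match v with
    | none => h
    | some ⟨i, j⟩ => ![x i, y i, z i] j, isLocatingColoring_of_legs (h := h) (x := x) (y := y)
      (z := z) rfl (fun _ => rfl) (fun _ => rfl) (fun _ => rfl) ?_ ?_ ?_ ?_ ?_ ?_ ?_⟩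
  · exact fun i hi => hhA (hi ▸ (t_mem i).1)
  · grind
  · exact fun i => (t_mem i).2.1
  · grind
  · grind
  · intro i
    obtain ⟨s, hs, hsi⟩ := Finset.exists_mem_ne (s := A) (by omega) (x i)
    obtain ⟨i', rfl⟩ := x_surj s hs
    exact ⟨i', hsi⟩
  · intro i i' hx hy hz
    have ht : t i = t i' := by
      refine Sigma.ext hx (heq_of_eq (Sigma.ext hy (heq_of_eq ?_)))
      grind
    exact (S.equivFinOfCardEq hS).symm.injective (Subtype.ext ht)

theorem distToSet_vert_zero_le {α : Type*} {c : PalmVert n (fun _ => 3) → α} {i i' : Fin n}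
    (h₀ : c (vert i 0) = c (vert i' 0)) (h₁ : c (vert i 1) = c (vert i' 1))
    (h₂ : c (vert i 2) = c (vert i' 2) ∨ c (vert i' 2) = c hub ∨
      ∃ l, c (vert i' 2) = c (vert l 0)) (s : α) :
    distToSet (Palm n (fun _ => 3)) (vert i 0) (c ⁻¹' {s}) ≤
      distToSet (Palm n (fun _ => 3)) (vert i' 0) (c ⁻¹' {s}) := by
  refine distToSet_le_of_forall_exists fun w hw => ?_
  obtain rfl : c w = s := hw
  have dist_le {l : Fin n} (hl : l ≠ i') (j : Fin 3) :
      (Palm n (fun _ => 3)).dist (vert i 0) (vert l j) ≤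
        (Palm n (fun _ => 3)).dist (vert i' 0) (vert l j) := by
    rw [dist_vert_vert, dist_vert_vert, if_neg hl.symm]
    split_ifs <;> simp
  cases w using vertThreeCases with
  | hub => exact ⟨hub, rfl, by rw [dist_vert_hub, dist_vert_hub]⟩
  | first l =>
    by_cases hl : l = i'
    · subst hl
      exact ⟨vert i 0, h₀, by simp⟩
    · exact ⟨_, rfl, dist_le hl 0⟩
  | second l =>
    by_cases hl : l = i'
    · subst hl
      exact ⟨vert i 1, h₁, by simp [dist_vert_vert]⟩
    · exact ⟨_, rfl, dist_le hl 1⟩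
  | third l =>
    by_cases hl : l = i'
    · subst hl
      rcases h₂ with h₂ | h₂ | ⟨l', h₂⟩
      · exact ⟨vert i 2, h₂, by simp [dist_vert_vert]⟩
      · exact ⟨hub, h₂.symm, by simp [dist_vert_vert, dist_vert_hub]⟩
      · refine ⟨vert l' 0, h₂.symm, ?_⟩
        rw [dist_vert_vert, dist_vert_vert, if_pos rfl]
        split_ifs <;> simp
    · exact ⟨_, rfl, dist_le hl 2⟩

theorem le_palmThreeBound_of_isLocatingColoring {k : ℕ} {c : PalmVert n (fun _ => 3) → Fin k}
    (hn : 1 ≤ n) (hc : IsLocatingColoring (Palm n (fun _ => 3)) c) :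
    2 ≤ k ∧ (n : ℤ) ≤ palmThreeBound k := by
  classical
  obtain ⟨hproper, hloc⟩ := hc
  have c_hub (i) : c hub ≠ c (vert i 0) := hproper _ _ (adj_hub_vert.2 rfl)
  have c_first (i) : c (vert i 0) ≠ c (vert i 1) :=
    hproper _ _ (adj_vert_vert.2 ⟨rfl, .inl rfl⟩)
  have c_second (i) : c (vert i 1) ≠ c (vert i 2) :=
    hproper _ _ (adj_vert_vert.2 ⟨rfl, .inl rfl⟩)
  have hk : 2 ≤ k := by
    have := Fin.val_ne_of_ne (c_hub ⟨0, hn⟩)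
    omega
  refine ⟨hk, ?_⟩
  let A : Finset (Fin k) := Finset.univ.image fun i => c (vert i 0)
  let M : Finset (Fin k) := (insert (c hub) A)ᶜ
  have mem_A (i) : c (vert i 0) ∈ A := Finset.mem_image_of_mem _ (Finset.mem_univ i)
  have hhA : c hub ∉ A := fun hmem => by
    obtain ⟨i, -, hi⟩ := Finset.mem_image.1 hmem
    exact c_hub i hi.symm
  have notMem_M {s} (hs : s ∉ M) : s = c hub ∨ ∃ l, s = c (vert l 0) := by
    simpa [M, A, eq_comm, or_iff_not_imp_left] using hs
  obtain ⟨m, hm, hcard⟩ := card_legTypes_compl hhA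
  rw [Fintype.card_fin] at hm
  let t (i : Fin n) : Σ _ : Fin k, Σ _ : Fin k, Option (Fin k) :=
    ⟨c (vert i 0), c (vert i 1), if c (vert i 2) ∈ M then some (c (vert i 2)) else none⟩
  have t_mem (i) : t i ∈ legTypes A M := by
    refine mem_legTypes.2 ⟨mem_A i, (c_first i).symm, ?_, ?_⟩ <;> grind
  have t_le {i i'} (h : t i = t i') (s) :
      distToSet (Palm n (fun _ => 3)) (vert i 0) (c ⁻¹' {s}) ≤
        distToSet (Palm n (fun _ => 3)) (vert i' 0) (c ⁻¹' {s}) := by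
    simp only [t, Sigma.mk.injEq, heq_eq_eq] at h
    obtain ⟨h₀, h₁, h₂⟩ := h
    refine distToSet_vert_zero_le h₀ h₁ ?_ s
    by_cases hM : c (vert i' 2) ∈ M
    · grind
    · exact .inr (notMem_M hM)
  have t_inj : Function.Injective t := by
    intro i i' h
    by_contra hii
    have hne : (vert i 0 : PalmVert n (fun _ => 3)) ≠ vert i' 0 := by
      intro heq
      cases heq
      exact hii rfl
    obtain ⟨s, hs⟩ := hloc _ _ hne
    exact hs ((t_le h s).antisymm (t_le h.symm s))
  have hle : n ≤ (legTypes A M).card := by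
    simpa using Finset.card_le_card_of_injOn t (s := Finset.univ) (fun i _ => t_mem i)
      t_inj.injOn
  exact (Int.ofNat_le.2 hle).trans
    (le_palmThreeBound (Finset.card_pos.2 ⟨_, mem_A ⟨0, hn⟩⟩) hk hm hcard)

theorem locatingChromaticNumber_eq_of_palmThreeBound {p : ℕ} (hn : 2 ≤ n) (hp : 3 ≤ p)
    (hlt : palmThreeBound (p - 1) < n) (hle : (n : ℤ) ≤ palmThreeBound p) :
    locatingChromaticNumber (Palm n (fun _ => 3)) = p := by
  have hpn := sub_one_le_palmThreeBound (show 2 ≤ p - 1 by omega)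
  refine IsLeast.csInf_eq ⟨exists_isLocatingColoring hp (by omega) hle, ?_⟩
  rintro k ⟨c, hc⟩
  obtain ⟨hk, hnk⟩ := le_palmThreeBound_of_isLocatingColoring (by omega) hc
  by_contra! hkp
  exact absurd (hnk.trans (palmThreeBound_mono hk (Nat.le_sub_one_of_lt hkp))) hlt.not_ge

end Palm

/-- For every `n ≥ 2` and every integer `p ≥ 3`:
`χ_L(S_n(3)) = p` if and only if `f(p-1) < n ≤ f(p)`, where
`f(p) = (p-1)·⌊p²/4⌋ - ⌊(p²-2p)/4⌋`. -/
theorem locatingChromaticNumber_regularPalm_three (n : ℕ) (hn : 2 ≤ n)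
    (p : ℕ) (hp : 3 ≤ p) :
    locatingChromaticNumber (Palm n (fun _ => 3)) = p ↔
      palmThreeBound (p - 1) < (n : ℤ) ∧ (n : ℤ) ≤ palmThreeBound p := by
  constructor
  · rintro rfl
    have hbound : ∃ k, (n : ℤ) ≤ palmThreeBound (k + 2) :=
      ⟨n, by have := sub_one_le_palmThreeBound (show 2 ≤ n + 2 by omega); omega⟩
    classical
    obtain ⟨k, hfind⟩ : ∃ k, Nat.find hbound = k := ⟨_, rfl⟩
    obtain ⟨hk, hmin⟩ := (Nat.find_eq_iff hbound).1 hfind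
    rcases k with _ | k
    · have : palmThreeBound (0 + 2) = 1 := by decide
      omega
    · have hlt : palmThreeBound (k + 1 + 2 - 1) < n := by
        rw [show k + 1 + 2 - 1 = k + 2 by omega]
        exact not_le.1 (hmin k k.lt_succ_self)
      rw [Palm.locatingChromaticNumber_eq_of_palmThreeBound hn (by omega) hlt hk]
      exact ⟨hlt, hk⟩
  · rintro ⟨hlt, hle⟩
    exact Palm.locatingChromaticNumber_eq_of_palmThreeBound hn hp hlt hle
end
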